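/- arXiv:1402.4694 — 2 statements merged into one kernel-verified Lean document; each statement's English description precedes it below -/
import Mathlib

section
/- Let α ∈ (0,π), γ ∈ [0,π/2], B = (sin γ·cos(α/2), sin γ·sin(α/2), cos γ) = (b₁,b₂,b₃), and τ ∈ ℝ. Let Hp^up := {(x₁,x₂) ∈ ℝ² : x₂ < x₁·tan(α/2)}. Then the infimum, over all smooth compactly supported u : ℝ² → ℂ with ∫_{Hp^up}|u|² > 0, of (∫_{Hp^up} |(−i∂₁ + x₂b₃)u|² + |∂₂u|² + (x₁b₂ − x₂b₁ − τ)²|u|² dx)/(∫_{Hp^up}|u|² dx) equals inf_{ξ∈ℝ} ( μ₁(ξ·cos γ + τ·sin γ) + (ξ·sin γ − τ·cos γ)² ). -/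
open Real MeasureTheory Set Filter

noncomputable section

namespace MagWedge

/-- The infinite sector `S_α := {(x₁,x₂) : |x₂| ≤ x₁·tan(α/2)}`. -/
def sector (α : ℝ) : Set (ℝ × ℝ) :=
  {x | |x.2| ≤ x.1 * Real.tan (α / 2)}

/-- The infinite wedge `W_α := S_α × ℝ` (coordinates `(x₁, x₂, x₃)`). -/
def wedge (α : ℝ) : Set (ℝ × ℝ × ℝ) :=
  {x | |x.2.1| ≤ x.1 * Real.tan (α / 2)}

/-- The upper half-plane `Hp^up := {x₂ < x₁·tan(α/2)}`. -/
def hpUp (α : ℝ) : Set (ℝ × ℝ) :=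
  {x | x.2 < x.1 * Real.tan (α / 2)}

/-- The lower half-plane `Hp^low := {x₂ > −x₁·tan(α/2)}`. -/
def hpLow (α : ℝ) : Set (ℝ × ℝ) :=
  {x | -(x.1 * Real.tan (α / 2)) < x.2}

/-- The magnetic/electric energy of `u` on a planar domain `Ω`, for magnetic field
`(b₁,b₂,b₃)` (gauge `A̲ = (−x₂ b₃, 0)`) and Fourier parameter `τ`. -/
def energy2D (Ω : Set (ℝ × ℝ)) (b1 b2 b3 τ : ℝ) (u : ℝ × ℝ → ℂ) : ℝ :=
  ∫ x in Ω,
    ‖(-Complex.I) * fderiv ℝ u x (1, 0) + ((x.2 * b3 : ℝ) : ℂ) * u x‖ ^ 2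
      + ‖fderiv ℝ u x (0, 1)‖ ^ 2
      + (x.1 * b2 - x.2 * b1 - τ) ^ 2 * ‖u x‖ ^ 2

/-- The squared `L²`-norm of `u` on a planar domain `Ω`. -/
def norm2D (Ω : Set (ℝ × ℝ)) (u : ℝ × ℝ → ℂ) : ℝ := ∫ x in Ω, ‖u x‖ ^ 2

/-- The bottom of the spectrum of the Neumann realization of
`(−i∇−A̲)² + (x₁b₂−x₂b₁−τ)²` on `Ω`, via the Rayleigh quotient. -/
def specInf2D (Ω : Set (ℝ × ℝ)) (b1 b2 b3 τ : ℝ) : ℝ :=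
  sInf { r : ℝ | ∃ u : ℝ × ℝ → ℂ, ContDiff ℝ (⊤ : ℕ∞) u ∧ HasCompactSupport u ∧
    0 < norm2D Ω u ∧ r = energy2D Ω b1 b2 b3 τ u / norm2D Ω u }

/-- The band function `s(B;α,τ)` on the sector `S_α`. -/
def bandFn (α b1 b2 b3 τ : ℝ) : ℝ := specInf2D (sector α) b1 b2 b3 τ

/-- `Σ(B;α,τ,R)` : the Rayleigh quotient infimum over functions supported outside the
(closed Euclidean) ball of radius `R` centered at the origin. -/
def SigmaR (α b1 b2 b3 τ R : ℝ) : ℝ :=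
  sInf { r : ℝ | ∃ u : ℝ × ℝ → ℂ, ContDiff ℝ (⊤ : ℕ∞) u ∧ HasCompactSupport u ∧
    (tsupport u ⊆ {x : ℝ × ℝ | R ^ 2 < x.1 ^ 2 + x.2 ^ 2}) ∧
    0 < norm2D (sector α) u ∧
    r = energy2D (sector α) b1 b2 b3 τ u / norm2D (sector α) u }

/-- The bottom of the essential spectrum via Persson's characterization:
`s_ess(B;α,τ) = sup_{R>0} Σ(B;α,τ,R)`. -/
def sEss (α b1 b2 b3 τ : ℝ) : ℝ :=
  sSup { r : ℝ | ∃ R > (0 : ℝ), r = SigmaR α b1 b2 b3 τ R }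

/-- The 3D magnetic energy on a domain `Ω ⊆ ℝ³` for the constant field `(b₁,b₂,b₃)`,
in the gauge `A = (−x₂b₃, 0, x₂b₁ − x₁b₂)`. -/
def energy3D (Ω : Set (ℝ × ℝ × ℝ)) (b1 b2 b3 : ℝ) (u : ℝ × ℝ × ℝ → ℂ) : ℝ :=
  ∫ x in Ω,
    ‖(-Complex.I) * fderiv ℝ u x (1, 0, 0) + ((x.2.1 * b3 : ℝ) : ℂ) * u x‖ ^ 2
      + ‖fderiv ℝ u x (0, 1, 0)‖ ^ 2
      + ‖(-Complex.I) * fderiv ℝ u x (0, 0, 1) - ((x.2.1 * b1 : ℝ) : ℂ) * u x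
          + ((x.1 * b2 : ℝ) : ℂ) * u x‖ ^ 2

/-- The squared `L²`-norm of `u` on a domain `Ω ⊆ ℝ³`. -/
def norm3D (Ω : Set (ℝ × ℝ × ℝ)) (u : ℝ × ℝ × ℝ → ℂ) : ℝ := ∫ x in Ω, ‖u x‖ ^ 2

/-- `λ(B;W_α)` : the bottom of the spectrum of the Neumann magnetic Laplacian on the
wedge `W_α` with constant magnetic field `B = (b₁,b₂,b₃)`. -/
def lambdaWedge (α b1 b2 b3 : ℝ) : ℝ :=
  sInf { r : ℝ | ∃ u : ℝ × ℝ × ℝ → ℂ, ContDiff ℝ (⊤ : ℕ∞) u ∧ HasCompactSupport u ∧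
    0 < norm3D (wedge α) u ∧ r = energy3D (wedge α) b1 b2 b3 u / norm3D (wedge α) u }

/-- The de Gennes function `μ₁(ξ)`: bottom of the spectrum of the Neumann realization of
`−d²/dt² + (t−ξ)²` on the half-line. -/
def deGennes (ξ : ℝ) : ℝ :=
  sInf { r : ℝ | ∃ u : ℝ → ℂ, ContDiff ℝ (⊤ : ℕ∞) u ∧ HasCompactSupport u ∧
    (0 < ∫ t in Ioi (0 : ℝ), ‖u t‖ ^ 2) ∧
    r = (∫ t in Ioi (0 : ℝ), ‖deriv u t‖ ^ 2 + (t - ξ) ^ 2 * ‖u t‖ ^ 2) /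
        (∫ t in Ioi (0 : ℝ), ‖u t‖ ^ 2) }

/-- `Θ₀ := inf_ξ μ₁(ξ)`. -/
def Theta0 : ℝ := ⨅ ξ : ℝ, deGennes ξ

/-- The half-space `{(s,t,z) : t > 0}` in ℝ³. -/
def halfSpace3 : Set (ℝ × ℝ × ℝ) := {x | 0 < x.2.1}

/-- `σ(θ)` : the bottom of the spectrum of the Neumann magnetic Laplacian on the half-space
with a unit magnetic field making angle `θ` with the boundary. -/
def sigmaHS (θ : ℝ) : ℝ :=
  sInf { r : ℝ | ∃ u : ℝ × ℝ × ℝ → ℂ, ContDiff ℝ (⊤ : ℕ∞) u ∧ HasCompactSupport u ∧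
    (0 < ∫ x in halfSpace3, ‖u x‖ ^ 2) ∧
    r = (∫ x in halfSpace3,
          ‖fderiv ℝ u x (1, 0, 0)‖ ^ 2 + ‖fderiv ℝ u x (0, 1, 0)‖ ^ 2
            + ‖(-Complex.I) * fderiv ℝ u x (0, 0, 1)
                - ((x.2.1 * Real.cos θ : ℝ) : ℂ) * u x
                + ((x.1 * Real.sin θ : ℝ) : ℂ) * u x‖ ^ 2) /
        (∫ x in halfSpace3, ‖u x‖ ^ 2) }

/-- `μ(α)` : the bottom of the spectrum of the magnetic Neumann Laplacian on the sector
`S_α` with unit constant (scalar) magnetic field. -/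
def muSector (α : ℝ) : ℝ :=
  sInf { r : ℝ | ∃ u : ℝ × ℝ → ℂ, ContDiff ℝ (⊤ : ℕ∞) u ∧ HasCompactSupport u ∧
    0 < norm2D (sector α) u ∧
    r = (∫ x in sector α,
          ‖(-Complex.I) * fderiv ℝ u x (1, 0) + (x.2 : ℂ) * u x‖ ^ 2
            + ‖fderiv ℝ u x (0, 1)‖ ^ 2) / norm2D (sector α) u }

end MagWedge

namespace MagWedge

lemma smooth_fderiv_apply {g : ℝ × ℝ → ℂ} (hg : ContDiff ℝ (⊤ : ℕ∞) g) (v : ℝ × ℝ) :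
    ContDiff ℝ (⊤ : ℕ∞) (fun x => fderiv ℝ g x v) :=
  (hg.fderiv_right (m := (⊤ : ℕ∞)) (by simp)).clm_apply contDiff_const

lemma compact_fderiv_apply {g : ℝ × ℝ → ℂ} (hc : HasCompactSupport g) (v : ℝ × ℝ) :
    HasCompactSupport (fun x => fderiv ℝ g x v) := hc.fderiv_apply (𝕜 := ℝ) v

lemma slice_compact {g : ℝ × ℝ → ℂ} (hc : HasCompactSupport g) (t : ℝ) :
    HasCompactSupport (fun s => g (s, t)) := by
  refine HasCompactSupport.intro (hc.isCompact.image continuous_fst) (fun s hs => ?_)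
  by_contra h
  exact hs ⟨(s, t), subset_tsupport _ h, rfl⟩

lemma slice_smooth {g : ℝ × ℝ → ℂ} (hg : ContDiff ℝ (⊤ : ℕ∞) g) (t : ℝ) :
    ContDiff ℝ (⊤ : ℕ∞) (fun s => g (s, t)) :=
  hg.comp (contDiff_id.prodMk contDiff_const)

lemma slice_integrable {g : ℝ × ℝ → ℂ} (hg : ContDiff ℝ (⊤ : ℕ∞) g) (hc : HasCompactSupport g)
    (t : ℝ) : Integrable (fun s => g (s, t)) :=
  (slice_smooth hg t).continuous.integrable_of_hasCompactSupport (slice_compact hc t)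

lemma hasDerivAt_slice1 {g : ℝ × ℝ → ℂ} (hg : ContDiff ℝ (⊤ : ℕ∞) g) (s t : ℝ) :
    HasDerivAt (fun s => g (s, t)) (fderiv ℝ g (s, t) (1, 0)) s := by
  have h1 : HasFDerivAt g (fderiv ℝ g (s, t)) (s, t) :=
    (hg.differentiable (by simp) _).hasFDerivAt
  exact h1.comp_hasDerivAt s ((hasDerivAt_id s).prodMk (hasDerivAt_const s t))

lemma hasDerivAt_slice2 {g : ℝ × ℝ → ℂ} (hg : ContDiff ℝ (⊤ : ℕ∞) g) (s t : ℝ) :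
    HasDerivAt (fun t => g (s, t)) (fderiv ℝ g (s, t) (0, 1)) t := by
  have h1 : HasFDerivAt g (fderiv ℝ g (s, t)) (s, t) :=
    (hg.differentiable (by simp) _).hasFDerivAt
  exact h1.comp_hasDerivAt t ((hasDerivAt_const t s).prodMk (hasDerivAt_id t))

lemma par_deriv {g : ℝ × ℝ → ℂ} (hg : ContDiff ℝ (⊤ : ℕ∞) g) (hc : HasCompactSupport g) (t : ℝ) :
    HasDerivAt (fun t => ∫ s, g (s, t)) (∫ s, fderiv ℝ g (s, t) (0, 1)) t := by
  have hg' := smooth_fderiv_apply hg (0, 1)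
  have hc' := compact_fderiv_apply hc (0, 1)
  obtain ⟨C, hC⟩ := hc'.exists_bound_of_continuous hg'.continuous
  have hK : IsCompact (Prod.fst '' tsupport g) := hc.isCompact.image continuous_fst
  refine (hasDerivAt_integral_of_dominated_loc_of_deriv_le (s := univ) (x₀ := t)
    (F := fun t s => g (s, t)) (F' := fun t s => fderiv ℝ g (s, t) (0, 1))
    (bound := (Prod.fst '' tsupport g).indicator (fun _ => C)) univ_mem
    (Eventually.of_forall fun x => (slice_smooth hg x).continuous.aestronglyMeasurable)
    (slice_integrable hg hc t)
    (slice_smooth hg' t).continuous.aestronglyMeasurable ?_ ?_ ?_).2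
  · refine Eventually.of_forall fun s x _ => ?_
    by_cases hs : s ∈ Prod.fst '' tsupport g
    · rw [indicator_of_mem hs]; exact hC (s, x)
    · rw [indicator_of_notMem hs]
      have : (s, x) ∉ tsupport g := fun h => hs ⟨_, h, rfl⟩
      have h2 : fderiv ℝ g (s, x) = 0 := by
        by_contra h
        exact this (support_fderiv_subset ℝ h)
      simp [h2]
  · exact (integrable_indicator_iff hK.measurableSet).2 (integrableOn_const hK.measure_lt_top.ne)
  · exact Eventually.of_forall fun s x _ => hasDerivAt_slice2 hg s x

lemma par_smooth_nat (n : ℕ) : ∀ {g : ℝ × ℝ → ℂ} (_ : ContDiff ℝ (⊤ : ℕ∞) g)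
    (_ : HasCompactSupport g), ContDiff ℝ n (fun t => ∫ s, g (s, t)) := by
  induction n with
  | zero =>
    intro g hg hc
    refine contDiff_zero.2 (continuous_iff_continuousAt.2 fun t => (par_deriv hg hc t).continuousAt)
  | succ n ih =>
    intro g hg hc
    have hd : deriv (fun t => ∫ s, g (s, t)) = fun t => ∫ s, fderiv ℝ g (s, t) (0, 1) :=
      funext fun t => (par_deriv hg hc t).deriv
    push_cast
    rw [contDiff_succ_iff_deriv]
    refine ⟨fun t => (par_deriv hg hc t).differentiableAt, by simp, ?_⟩
    rw [hd]
    exact ih (smooth_fderiv_apply hg _) (compact_fderiv_apply hc _)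

lemma par_smooth {g : ℝ × ℝ → ℂ} (hg : ContDiff ℝ (⊤ : ℕ∞) g) (hc : HasCompactSupport g) :
    ContDiff ℝ (⊤ : ℕ∞) (fun t => ∫ s, g (s, t)) :=
  contDiff_infty.2 fun n => par_smooth_nat n hg hc

lemma par_compact {g : ℝ × ℝ → ℂ} (hc : HasCompactSupport g) :
    HasCompactSupport (fun t => ∫ s, g (s, t)) := by
  refine HasCompactSupport.intro (hc.isCompact.image continuous_snd) (fun t ht => ?_)
  have : ∀ s, g (s, t) = 0 := fun s => by
    by_contra h
    exact ht ⟨(s, t), subset_tsupport _ h, rfl⟩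
  simp [this]

/-- partial Fourier transform -/
def Fh (g : ℝ × ℝ → ℂ) (ξ t : ℝ) : ℂ :=
  ∫ s, Complex.exp ((-2 * π * s * ξ : ℝ) * Complex.I) * g (s, t)

lemma smooth_exp_ofReal {E : Type*} [NormedAddCommGroup E] [NormedSpace ℝ E] {f : E → ℝ}
    (hf : ContDiff ℝ (⊤ : ℕ∞) f) :
    ContDiff ℝ (⊤ : ℕ∞) (fun x => Complex.exp ((f x : ℂ) * Complex.I)) :=
  ((Complex.ofRealCLM.contDiff.comp hf).mul contDiff_const).cexp

lemma ker_smooth (ξ : ℝ) : ContDiff ℝ (⊤ : ℕ∞)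
    (fun p : ℝ × ℝ => Complex.exp ((-2 * π * p.1 * ξ : ℝ) * Complex.I)) :=
  smooth_exp_ofReal (by fun_prop)

lemma Fh_smooth {g : ℝ × ℝ → ℂ} (hg : ContDiff ℝ (⊤ : ℕ∞) g) (hc : HasCompactSupport g) (ξ : ℝ) :
    ContDiff ℝ (⊤ : ℕ∞) (Fh g ξ) :=
  par_smooth (g := fun p => Complex.exp ((-2 * π * p.1 * ξ : ℝ) * Complex.I) * g p)
    ((ker_smooth ξ).mul hg) hc.mul_left

lemma Fh_compact {g : ℝ × ℝ → ℂ} (hc : HasCompactSupport g) (ξ : ℝ) :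
    HasCompactSupport (Fh g ξ) :=
  par_compact (g := fun p => Complex.exp ((-2 * π * p.1 * ξ : ℝ) * Complex.I) * g p)
    hc.mul_left

lemma Fh_deriv {g : ℝ × ℝ → ℂ} (hg : ContDiff ℝ (⊤ : ℕ∞) g) (hc : HasCompactSupport g)
    (ξ t : ℝ) : deriv (Fh g ξ) t = Fh (fun x => fderiv ℝ g x (0, 1)) ξ t := by
  have hG := (ker_smooth ξ).mul hg
  refine (par_deriv (g := fun p => Complex.exp ((-2 * π * p.1 * ξ : ℝ) * Complex.I) * g p)
    hG hc.mul_left t).deriv.trans ?_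
  unfold Fh
  congr 1
  ext s
  rw [← ((hasDerivAt_slice2 hG s t)).deriv]
  exact ((hasDerivAt_slice2 hg s t).const_mul
    (Complex.exp ((-2 * π * s * ξ : ℝ) * Complex.I))).deriv

lemma Fh_eq_fourier (g : ℝ × ℝ → ℂ) (ξ t : ℝ) :
    Fh g ξ t = FourierTransform.fourier (fun s => g (s, t)) ξ := by
  rw [Real.fourier_real_eq_integral_exp_smul]
  rfl

lemma Fh_deriv1 {g : ℝ × ℝ → ℂ} (hg : ContDiff ℝ (⊤ : ℕ∞) g) (hc : HasCompactSupport g)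
    (ξ t : ℝ) : Fh (fun x => fderiv ℝ g x (1, 0)) ξ t = (2 * π * Complex.I * ξ) * Fh g ξ t := by
  have hd : deriv (fun s => g (s, t)) = fun s => fderiv ℝ g (s, t) (1, 0) :=
    funext fun s => (hasDerivAt_slice1 hg s t).deriv
  rw [Fh_eq_fourier, Fh_eq_fourier, ← hd, Real.fourier_deriv (slice_integrable hg hc t)
    ((slice_smooth hg t).differentiable (by simp))]
  · simp
  · rw [hd]
    exact slice_integrable (smooth_fderiv_apply hg _) (compact_fderiv_apply hc _) t

lemma Fh_plancherel {g : ℝ × ℝ → ℂ} (hg : ContDiff ℝ (⊤ : ℕ∞) g) (hc : HasCompactSupport g)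
    (t : ℝ) : Integrable (fun ξ => ‖Fh g ξ t‖ ^ 2) ∧
      ∫ ξ, ‖Fh g ξ t‖ ^ 2 = ∫ s, ‖g (s, t)‖ ^ 2 := by
  let f : SchwartzMap ℝ ℂ := (slice_compact hc t).toSchwartzMap (slice_smooth hg t)
  have hf : ∀ ξ, Fh g ξ t = (FourierTransform.fourier f) ξ := fun ξ => by
    rw [Fh_eq_fourier, SchwartzMap.fourier_coe]; rfl
  simp_rw [hf]
  refine ⟨?_, SchwartzMap.integral_norm_sq_fourier f⟩
  exact ((FourierTransform.fourier f).memLp 2).integrable_norm_pow (by norm_num)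

lemma Fh_continuous {g : ℝ × ℝ → ℂ} (hg : ContDiff ℝ (⊤ : ℕ∞) g) (hc : HasCompactSupport g) :
    Continuous (fun p : ℝ × ℝ => Fh g p.1 p.2) := by
  have hK : IsCompact (Prod.fst '' tsupport g) := hc.isCompact.image continuous_fst
  have h := continuous_parametric_integral_of_continuous (μ := volume) (X := ℝ × ℝ) (Y := ℝ)
    (f := fun p s => Complex.exp ((-2 * π * s * p.1 : ℝ) * Complex.I) * g (s, p.2))
    (by
      have := hg.continuous
      unfold Function.uncurry
      fun_prop) hK
  convert h using 2 with p
  rw [setIntegral_eq_integral_of_forall_compl_eq_zero]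
  · rfl
  · intro s hs
    have : g (s, p.2) = 0 := by
      by_contra h
      exact hs ⟨(s, p.2), subset_tsupport _ h, rfl⟩
    simp [this]

/-- half plane t > 0 -/
def HP : Set (ℝ × ℝ) := univ ×ˢ Ioi 0

lemma HP_restrict : (volume : Measure (ℝ × ℝ)).restrict HP =
    (volume : Measure ℝ).prod (volume.restrict (Ioi 0)) := by
  rw [HP, Measure.volume_eq_prod, ← Measure.prod_restrict, Measure.restrict_univ]

lemma sq_integrable {g : ℝ × ℝ → ℂ} (hg : Continuous g) (hc : HasCompactSupport g) :
    Integrable (fun p => ‖g p‖ ^ 2) := by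
  have h1 : HasCompactSupport (fun p => ‖g p‖ ^ 2) :=
    hc.comp_left (g := fun z : ℂ => ‖z‖ ^ 2) (by simp)
  have h2 : Continuous (fun p => ‖g p‖ ^ 2) := by fun_prop
  exact h2.integrable_of_hasCompactSupport h1

lemma plancherel_HP {g : ℝ × ℝ → ℂ} (hg : ContDiff ℝ (⊤ : ℕ∞) g) (hc : HasCompactSupport g) :
    Integrable (fun p : ℝ × ℝ => ‖Fh g p.1 p.2‖ ^ 2)
      ((volume : Measure ℝ).prod (volume.restrict (Ioi 0))) ∧
    ∫ p in HP, ‖g p‖ ^ 2 = ∫ ξ, ∫ t in Ioi (0 : ℝ), ‖Fh g ξ t‖ ^ 2 := by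
  have hi : Integrable (fun p => ‖g p‖ ^ 2)
      ((volume : Measure ℝ).prod (volume.restrict (Ioi 0))) := by
    rw [← HP_restrict]
    exact (sq_integrable hg.continuous hc).integrableOn
  have h1 : Integrable (fun p : ℝ × ℝ => ‖Fh g p.1 p.2‖ ^ 2)
      ((volume : Measure ℝ).prod (volume.restrict (Ioi 0))) := by
    have hcont : Continuous (fun p : ℝ × ℝ => ‖Fh g p.1 p.2‖ ^ 2) :=
      (Fh_continuous hg hc).norm.pow 2
    rw [integrable_prod_iff' hcont.aestronglyMeasurable]
    refine ⟨Eventually.of_forall fun t => (Fh_plancherel hg hc t).1, ?_⟩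
    have : ∀ t, ∫ ξ, ‖‖Fh g ξ t‖ ^ 2‖ = ∫ s, ‖g (s, t)‖ ^ 2 := fun t => by
      rw [← (Fh_plancherel hg hc t).2]; simp
    simp_rw [this]
    exact hi.integral_prod_right
  refine ⟨h1, ?_⟩
  rw [HP_restrict, integral_prod_symm _ hi, ← integral_prod _ h1, integral_prod_symm _ h1]
  simp_rw [(Fh_plancherel hg hc _).2]

lemma sq_integrable1 {g : ℝ → ℂ} (hg : Continuous g) (hc : HasCompactSupport g) :
    Integrable (fun p => ‖g p‖ ^ 2) := by
  have h1 : HasCompactSupport (fun p => ‖g p‖ ^ 2) :=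
    hc.comp_left (g := fun z : ℂ => ‖z‖ ^ 2) (by simp)
  have h2 : Continuous (fun p => ‖g p‖ ^ 2) := by fun_prop
  exact h2.integrable_of_hasCompactSupport h1

lemma deGennes_bdd (η : ℝ) : BddBelow { r : ℝ | ∃ u : ℝ → ℂ, ContDiff ℝ (⊤ : ℕ∞) u ∧
    HasCompactSupport u ∧ (0 < ∫ t in Ioi (0 : ℝ), ‖u t‖ ^ 2) ∧
    r = (∫ t in Ioi (0 : ℝ), ‖deriv u t‖ ^ 2 + (t - η) ^ 2 * ‖u t‖ ^ 2) /
        (∫ t in Ioi (0 : ℝ), ‖u t‖ ^ 2) } := by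
  refine ⟨0, ?_⟩
  rintro r ⟨u, -, -, h, rfl⟩
  exact div_nonneg (integral_nonneg fun t => by positivity) h.le

lemma deGennes_nonneg (η : ℝ) : 0 ≤ deGennes η := by
  refine Real.sInf_nonneg ?_
  rintro r ⟨u, -, -, h, rfl⟩
  exact div_nonneg (integral_nonneg fun t => by positivity) h.le

lemma deGennes_le (η : ℝ) {v : ℝ → ℂ} (hv : ContDiff ℝ (⊤ : ℕ∞) v) (hc : HasCompactSupport v) :
    deGennes η * ∫ t in Ioi (0 : ℝ), ‖v t‖ ^ 2 ≤
      ∫ t in Ioi (0 : ℝ), ‖deriv v t‖ ^ 2 + (t - η) ^ 2 * ‖v t‖ ^ 2 := by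
  have h0 : 0 ≤ ∫ t in Ioi (0 : ℝ), ‖v t‖ ^ 2 := integral_nonneg fun t => by positivity
  rcases h0.eq_or_lt with h | h
  · rw [← h, mul_zero]
    exact integral_nonneg fun t => by positivity
  · rw [← le_div_iff₀ h]
    exact csInf_le (deGennes_bdd η) ⟨v, hv, hc, h, rfl⟩

/-- model energy on the half plane -/
def EM (c σ τ : ℝ) (w : ℝ × ℝ → ℂ) : ℝ :=
  ∫ p in HP, ‖(-Complex.I) * fderiv ℝ w p (1, 0) - ((p.2 * c : ℝ) : ℂ) * w p‖ ^ 2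
    + ‖fderiv ℝ w p (0, 1)‖ ^ 2 + (p.2 * σ - τ) ^ 2 * ‖w p‖ ^ 2

lemma integrable_weight {v : ℝ → ℂ} (hv : ContDiff ℝ (⊤ : ℕ∞) v) (hc : HasCompactSupport v)
    (η : ℝ) : Integrable (fun t => ‖deriv v t‖ ^ 2 + (t - η) ^ 2 * ‖v t‖ ^ 2) := by
  have h1 : Integrable (fun t => ‖deriv v t‖ ^ 2) :=
    sq_integrable1 (hv.continuous_deriv (by simp)) hc.deriv
  have hcont := hv.continuous
  have h2 : Integrable (fun t => ‖((t - η : ℝ) : ℂ) * v t‖ ^ 2) :=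
    sq_integrable1 (by fun_prop) hc.mul_left
  refine (h1.add h2).congr (Eventually.of_forall fun t => ?_)
  simp only [Pi.add_apply, norm_mul, Complex.norm_real, mul_pow, Real.norm_eq_abs, sq_abs]

lemma lower (c σ τ Λ : ℝ) (hcs : c ^ 2 + σ ^ 2 = 1)
    (hΛ : ∀ ξ : ℝ, Λ ≤ deGennes (ξ * c + τ * σ) + (ξ * σ - τ * c) ^ 2)
    {w : ℝ × ℝ → ℂ} (hw : ContDiff ℝ (⊤ : ℕ∞) w) (hc : HasCompactSupport w) :
    Λ * ∫ p in HP, ‖w p‖ ^ 2 ≤ EM c σ τ w := by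
  set g1 : ℝ × ℝ → ℂ := fun x => fderiv ℝ w x (1, 0) with hg1
  set g2 : ℝ × ℝ → ℂ := fun x => fderiv ℝ w x (0, 1) with hg2
  set g3 : ℝ × ℝ → ℂ := fun p => (-Complex.I) * g1 p - ((p.2 * c : ℝ) : ℂ) * w p with hg3
  set g4 : ℝ × ℝ → ℂ := fun p => ((p.2 * σ - τ : ℝ) : ℂ) * w p with hg4
  have s1 : ContDiff ℝ (⊤ : ℕ∞) g1 := smooth_fderiv_apply hw _
  have s2 : ContDiff ℝ (⊤ : ℕ∞) g2 := smooth_fderiv_apply hw _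
  have c1 : HasCompactSupport g1 := compact_fderiv_apply hc _
  have c2 : HasCompactSupport g2 := compact_fderiv_apply hc _
  have r1 : ContDiff ℝ (⊤ : ℕ∞) (fun p : ℝ × ℝ => ((p.2 * c : ℝ) : ℂ)) :=
    Complex.ofRealCLM.contDiff.comp (by fun_prop : ContDiff ℝ (⊤ : ℕ∞) fun p : ℝ × ℝ => p.2 * c)
  have r2 : ContDiff ℝ (⊤ : ℕ∞) (fun p : ℝ × ℝ => ((p.2 * σ - τ : ℝ) : ℂ)) :=
    Complex.ofRealCLM.contDiff.comp
      (by fun_prop : ContDiff ℝ (⊤ : ℕ∞) fun p : ℝ × ℝ => p.2 * σ - τ)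
  have s3 : ContDiff ℝ (⊤ : ℕ∞) g3 := (contDiff_const.mul s1).sub (r1.mul hw)
  have s4 : ContDiff ℝ (⊤ : ℕ∞) g4 := r2.mul hw
  have c3 : HasCompactSupport g3 := by
    have a1 : HasCompactSupport (fun p => (-Complex.I) * g1 p) := c1.mul_left
    have a2 : HasCompactSupport (fun p : ℝ × ℝ => ((p.2 * c : ℝ) : ℂ) * w p) := hc.mul_left
    exact a1.sub a2
  have c4 : HasCompactSupport g4 := hc.mul_left
  obtain ⟨i0, p0⟩ := plancherel_HP hw hc
  obtain ⟨i2, p2⟩ := plancherel_HP s2 c2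
  obtain ⟨i3, p3⟩ := plancherel_HP s3 c3
  obtain ⟨i4, p4⟩ := plancherel_HP s4 c4
  have hE : EM c σ τ w = ∫ ξ, ∫ t in Ioi (0 : ℝ),
      (‖Fh g3 ξ t‖ ^ 2 + ‖Fh g2 ξ t‖ ^ 2 + ‖Fh g4 ξ t‖ ^ 2) := by
    have e1 : EM c σ τ w = ∫ p in HP, (‖g3 p‖ ^ 2 + ‖g2 p‖ ^ 2 + ‖g4 p‖ ^ 2) := by
      unfold EM
      congr 1
      ext p
      simp only [hg3, hg2, hg4, hg1, norm_mul, Complex.norm_real, mul_pow, Real.norm_eq_abs, sq_abs]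
    have j2 := (sq_integrable s2.continuous c2).integrableOn (s := HP)
    have j3 := (sq_integrable s3.continuous c3).integrableOn (s := HP)
    have j4 := (sq_integrable s4.continuous c4).integrableOn (s := HP)
    have i23 : Integrable (fun p : ℝ × ℝ => ‖Fh g3 p.1 p.2‖ ^ 2 + ‖Fh g2 p.1 p.2‖ ^ 2)
      ((volume : Measure ℝ).prod (volume.restrict (Ioi 0))) := i3.add i2
    have j23 : IntegrableOn (fun p : ℝ × ℝ => ‖g3 p‖ ^ 2 + ‖g2 p‖ ^ 2) HP := j3.add j2
    have i234 : Integrable (fun p : ℝ × ℝ => ‖Fh g3 p.1 p.2‖ ^ 2 + ‖Fh g2 p.1 p.2‖ ^ 2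
      + ‖Fh g4 p.1 p.2‖ ^ 2)
      ((volume : Measure ℝ).prod (volume.restrict (Ioi 0))) := i23.add i4
    rw [e1, integral_add j23 j4, integral_add j3 j2, p2, p3, p4,
      ← integral_prod _ i2, ← integral_prod _ i3, ← integral_prod _ i4,
      ← integral_prod _ i234, integral_add i23 i4, integral_add i3 i2]
  have i234 : Integrable (fun p : ℝ × ℝ => ‖Fh g3 p.1 p.2‖ ^ 2 + ‖Fh g2 p.1 p.2‖ ^ 2
      + ‖Fh g4 p.1 p.2‖ ^ 2)
      ((volume : Measure ℝ).prod (volume.restrict (Ioi 0))) := (i3.add i2).add i4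
  rw [hE, p0, ← integral_const_mul]
  refine integral_mono (i0.integral_prod_left.const_mul Λ) i234.integral_prod_left ?_
  intro ξ
  have hv := Fh_smooth hw hc ξ
  have hvc := Fh_compact hc ξ
  set v := Fh w ξ with hvdef
  have f3 : ∀ t, Fh g3 ξ t = ((2 * π * ξ - t * c : ℝ) : ℂ) * v t := by
    intro t
    have q1 := Fh_deriv1 hw hc ξ t
    have hk : Continuous (fun s : ℝ => Complex.exp ((-2 * π * s * ξ : ℝ) * Complex.I)) := by
      fun_prop
    have k1 : Integrable (fun s => Complex.exp ((-2 * π * s * ξ : ℝ) * Complex.I) * g1 (s, t)) :=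
      (hk.mul (slice_smooth s1 t).continuous).integrable_of_hasCompactSupport
        (slice_compact c1 t).mul_left
    have k2 : Integrable (fun s => Complex.exp ((-2 * π * s * ξ : ℝ) * Complex.I) * w (s, t)) :=
      (hk.mul (slice_smooth hw t).continuous).integrable_of_hasCompactSupport
        (slice_compact hc t).mul_left
    have : Fh g3 ξ t = (-Complex.I) * Fh g1 ξ t - ((t * c : ℝ) : ℂ) * Fh w ξ t := by
      unfold Fh
      rw [← integral_const_mul, ← integral_const_mul,
        ← integral_sub (k1.const_mul _) (k2.const_mul _)]
      congr 1
      ext s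
      simp only [hg3]
      ring
    rw [this, q1]
    push_cast
    linear_combination (-2 * π * ξ * Fh w ξ t) * Complex.I_sq
  have f4 : ∀ t, Fh g4 ξ t = ((t * σ - τ : ℝ) : ℂ) * v t := by
    intro t
    simp only [hvdef]
    unfold Fh
    rw [← integral_const_mul]
    congr 1
    ext s
    simp only [hg4]
    ring
  have f2 : ∀ t, Fh g2 ξ t = deriv v t := fun t => (Fh_deriv hw hc ξ t).symm
  set η := 2 * π * ξ * c + τ * σ with hη
  have key : ∀ t, ‖Fh g3 ξ t‖ ^ 2 + ‖Fh g2 ξ t‖ ^ 2 + ‖Fh g4 ξ t‖ ^ 2 =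
      (‖deriv v t‖ ^ 2 + (t - η) ^ 2 * ‖v t‖ ^ 2) + (2 * π * ξ * σ - τ * c) ^ 2 * ‖v t‖ ^ 2 := by
    intro t
    rw [f2, f3, f4]
    simp only [norm_mul, Complex.norm_real, mul_pow, Real.norm_eq_abs, sq_abs]
    rw [hη]
    linear_combination (‖v t‖ ^ 2 * (t ^ 2 - (2 * π * ξ) ^ 2 - τ ^ 2)) * hcs
  have w1 := (integrable_weight hv hvc η).integrableOn (s := Ioi 0)
  have w2 := (sq_integrable1 hv.continuous hvc).integrableOn (s := Ioi 0)
  have d := deGennes_le η hv hvc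
  have hN : 0 ≤ ∫ t in Ioi (0 : ℝ), ‖v t‖ ^ 2 := integral_nonneg fun t => by positivity
  show Λ * ∫ t in Ioi (0 : ℝ), ‖v t‖ ^ 2 ≤ ∫ t in Ioi (0 : ℝ), _
  simp_rw [key]
  rw [integral_add w1 (w2.const_mul _), integral_const_mul]
  have := mul_le_mul_of_nonneg_right (hΛ (2 * π * ξ)) hN
  rw [← hη] at this
  linarith

lemma norm_exp_I (x : ℝ) : ‖Complex.exp ((x : ℂ) * Complex.I)‖ = 1 :=
  Complex.norm_exp_ofReal_mul_I x

lemma exists_cutoff : ∃ χ : ℝ → ℝ, ContDiff ℝ (⊤ : ℕ∞) χ ∧ HasCompactSupport χ ∧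
    0 < ∫ s, χ s ^ 2 := by
  let f : ContDiffBump (0 : ℝ) := ⟨1, 2, by norm_num, by norm_num⟩
  have hs : ContDiff ℝ (⊤ : ℕ∞) f := f.contDiff
  have hc : HasCompactSupport f := f.hasCompactSupport
  refine ⟨f, hs, hc, ?_⟩
  have h1 : HasCompactSupport (fun s => f s ^ 2) :=
    hc.comp_left (g := fun z : ℝ => z ^ 2) (by simp)
  have h2 : Continuous (fun s => f s ^ 2) := hs.continuous.pow 2
  refine h2.integral_pos_of_hasCompactSupport_nonneg_nonzero h1 (fun s => by positivity) (x := 0) ?_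
  have : f 0 = 1 := f.one_of_mem_closedBall (by simp [f])
  simp [this]

lemma sq_integrableR {g : ℝ → ℝ} (hg : Continuous g) (hc : HasCompactSupport g) :
    Integrable (fun p => g p ^ 2) := by
  have h1 : HasCompactSupport (fun p => g p ^ 2) :=
    hc.comp_left (g := fun z : ℝ => z ^ 2) (by simp)
  exact (hg.pow 2).integrable_of_hasCompactSupport h1

lemma exists_cutoff_eps {ε : ℝ} (hε : 0 < ε) : ∃ χ : ℝ → ℝ, ContDiff ℝ (⊤ : ℕ∞) χ ∧
    HasCompactSupport χ ∧ 0 < ∫ s, χ s ^ 2 ∧ ∫ s, deriv χ s ^ 2 ≤ ε * ∫ s, χ s ^ 2 := by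
  obtain ⟨χ, hs, hc, hpos⟩ := exists_cutoff
  set X := ∫ s, χ s ^ 2
  set Y := ∫ s, deriv χ s ^ 2
  have hY : 0 ≤ Y := integral_nonneg fun s => by positivity
  obtain ⟨r, hr0, hr⟩ : ∃ r : ℝ, 0 < r ∧ r ^ 2 * Y ≤ ε * X := by
    refine ⟨√(ε * X / (Y + 1)), by positivity, ?_⟩
    rw [Real.sq_sqrt (by positivity), div_mul_eq_mul_div, div_le_iff₀ (by positivity)]
    have : 0 < ε * X := by positivity
    nlinarith
  have hd : ∀ s, deriv (fun s => χ (r * s)) s = r * deriv χ (r * s) := fun s => by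
    have := deriv_comp_mul_left r χ s
    simpa using this
  have hX' : ∫ s, χ (r * s) ^ 2 = r⁻¹ * X := by
    have := Measure.integral_comp_mul_left (fun s => χ s ^ 2) r
    rw [this, abs_of_pos (by positivity), smul_eq_mul]
  have hY' : ∫ s, deriv (fun s => χ (r * s)) s ^ 2 = r ^ 2 * (r⁻¹ * Y) := by
    simp_rw [hd, mul_pow]
    rw [integral_const_mul]
    have := Measure.integral_comp_mul_left (fun s => deriv χ s ^ 2) r
    rw [this, abs_of_pos (by positivity), smul_eq_mul]
  refine ⟨fun s => χ (r * s), hs.comp (by fun_prop), ?_, ?_, ?_⟩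
  · exact hc.comp_homeomorph (Homeomorph.mulLeft₀ r hr0.ne')
  · rw [hX']; positivity
  · rw [hX', hY']
    have : 0 < r⁻¹ := by positivity
    nlinarith

/-- trial function -/
def trial (ξ : ℝ) (χ : ℝ → ℝ) (v : ℝ → ℂ) (p : ℝ × ℝ) : ℂ :=
  Complex.exp ((ξ * p.1 : ℝ) * Complex.I) * (χ p.1 : ℂ) * v p.2

lemma trial_smooth (ξ : ℝ) {χ : ℝ → ℝ} {v : ℝ → ℂ} (hχ : ContDiff ℝ (⊤ : ℕ∞) χ)
    (hv : ContDiff ℝ (⊤ : ℕ∞) v) : ContDiff ℝ (⊤ : ℕ∞) (trial ξ χ v) :=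
  ((smooth_exp_ofReal (by fun_prop : ContDiff ℝ (⊤ : ℕ∞) fun p : ℝ × ℝ => ξ * p.1)).mul
    (Complex.ofRealCLM.contDiff.comp (hχ.comp contDiff_fst))).mul (hv.comp contDiff_snd)

lemma trial_compact (ξ : ℝ) {χ : ℝ → ℝ} {v : ℝ → ℂ} (hχ : HasCompactSupport χ)
    (hv : HasCompactSupport v) : HasCompactSupport (trial ξ χ v) := by
  refine HasCompactSupport.intro (hχ.isCompact.prod hv.isCompact) (fun p hp => ?_)
  by_contra h
  refine hp ⟨subset_tsupport _ fun h0 => h ?_, subset_tsupport _ fun h0 => h ?_⟩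
  · simp [trial, h0]
  · simp [trial, h0]

lemma trial_d1 (ξ : ℝ) {χ : ℝ → ℝ} {v : ℝ → ℂ} (hχ : ContDiff ℝ (⊤ : ℕ∞) χ)
    (hv : ContDiff ℝ (⊤ : ℕ∞) v) (p : ℝ × ℝ) : fderiv ℝ (trial ξ χ v) p (1, 0) =
      Complex.exp ((ξ * p.1 : ℝ) * Complex.I) *
        (ξ * Complex.I * χ p.1 + deriv χ p.1) * v p.2 := by
  obtain ⟨s, t⟩ := p
  refine (hasDerivAt_slice1 (trial_smooth ξ hχ hv) s t).unique ?_
  have h1 : HasDerivAt (fun s : ℝ => ((ξ * s : ℝ) : ℂ) * Complex.I) (((ξ * 1 : ℝ) : ℂ) * Complex.I) s :=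
    (((hasDerivAt_id s).const_mul ξ).ofReal_comp).mul_const _
  have h2 : HasDerivAt (fun s => (χ s : ℂ)) ((deriv χ s : ℝ) : ℂ) s :=
    ((hχ.differentiable (by simp) s).hasDerivAt).ofReal_comp
  have h3 : HasDerivAt (fun s => trial ξ χ v (s, t)) _ s := (h1.cexp.mul h2).mul_const (v t)
  refine h3.congr_deriv ?_
  push_cast
  ring

lemma trial_d2 (ξ : ℝ) {χ : ℝ → ℝ} {v : ℝ → ℂ} (hχ : ContDiff ℝ (⊤ : ℕ∞) χ)
    (hv : ContDiff ℝ (⊤ : ℕ∞) v) (p : ℝ × ℝ) : fderiv ℝ (trial ξ χ v) p (0, 1) =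
      Complex.exp ((ξ * p.1 : ℝ) * Complex.I) * χ p.1 * deriv v p.2 := by
  obtain ⟨s, t⟩ := p
  refine (hasDerivAt_slice2 (trial_smooth ξ hχ hv) s t).unique ?_
  exact ((hv.differentiable (by simp) t).hasDerivAt).const_mul
    (Complex.exp ((ξ * s : ℝ) * Complex.I) * (χ s : ℂ))

lemma trial_norm (ξ : ℝ) (χ : ℝ → ℝ) (v : ℝ → ℂ) :
    ∫ p in HP, ‖trial ξ χ v p‖ ^ 2 =
      (∫ s, χ s ^ 2) * ∫ t in Ioi (0 : ℝ), ‖v t‖ ^ 2 := by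
  rw [HP_restrict, ← integral_prod_mul]
  congr 1
  ext p
  simp only [trial, norm_mul, norm_exp_I, Complex.norm_real, mul_pow, Real.norm_eq_abs, sq_abs]
  ring

lemma normsq_aux (a b : ℝ) : ‖(a : ℂ) - Complex.I * b‖ ^ 2 = a ^ 2 + b ^ 2 := by
  rw [← Complex.normSq_eq_norm_sq, Complex.normSq_apply]
  simp
  ring

lemma trial_energy (c σ τ ξ : ℝ) (hcs : c ^ 2 + σ ^ 2 = 1) {χ : ℝ → ℝ} {v : ℝ → ℂ}
    (hχ : ContDiff ℝ (⊤ : ℕ∞) χ) (hχc : HasCompactSupport χ)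
    (hv : ContDiff ℝ (⊤ : ℕ∞) v) (hvc : HasCompactSupport v) :
    EM c σ τ (trial ξ χ v) =
      (∫ s, χ s ^ 2) * ((∫ t in Ioi (0 : ℝ),
          ‖deriv v t‖ ^ 2 + (t - (ξ * c + τ * σ)) ^ 2 * ‖v t‖ ^ 2)
        + (ξ * σ - τ * c) ^ 2 * ∫ t in Ioi (0 : ℝ), ‖v t‖ ^ 2)
      + (∫ s, deriv χ s ^ 2) * ∫ t in Ioi (0 : ℝ), ‖v t‖ ^ 2 := by
  have w1 := (integrable_weight hv hvc (ξ * c + τ * σ)).integrableOn (s := Ioi 0)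
  have w2 := (sq_integrable1 hv.continuous hvc).integrableOn (s := Ioi 0)
  have x1 := sq_integrableR hχ.continuous hχc
  have x2 := sq_integrableR (hχ.continuous_deriv (by simp)) hχc.deriv
  rw [← integral_const_mul, ← integral_add w1 (w2.const_mul _), ← integral_prod_mul,
    ← integral_prod_mul, EM, HP_restrict]
  rw [← integral_add]
  · congr 1
    ext p
    have e : (-Complex.I) * (Complex.exp ((ξ * p.1 : ℝ) * Complex.I) *
        (ξ * Complex.I * χ p.1 + deriv χ p.1) * v p.2)
        - ((p.2 * c : ℝ) : ℂ) * trial ξ χ v p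
        = Complex.exp ((ξ * p.1 : ℝ) * Complex.I) * v p.2 *
          ((((ξ - p.2 * c) * χ p.1 : ℝ) : ℂ) - Complex.I * (deriv χ p.1 : ℝ)) := by
      rw [trial]
      push_cast
      linear_combination (-Complex.exp ((ξ * p.1) * Complex.I) * ξ * χ p.1 * v p.2) *
        Complex.I_sq
    rw [trial_d1 ξ hχ hv, trial_d2 ξ hχ hv, e]
    simp only [trial, norm_mul, norm_exp_I, Complex.norm_real, mul_pow, Real.norm_eq_abs, sq_abs,
      normsq_aux]
    linear_combination (‖v p.2‖ ^ 2 * χ p.1 ^ 2 * (p.2 ^ 2 - ξ ^ 2 - τ ^ 2)) * hcs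
  · exact x1.mul_prod (w1.add (w2.const_mul _))
  · exact x2.mul_prod w2

lemma upper (c σ τ Λ ξ : ℝ) (hcs : c ^ 2 + σ ^ 2 = 1)
    (hΛ : ∀ w : ℝ × ℝ → ℂ, ContDiff ℝ (⊤ : ℕ∞) w → HasCompactSupport w →
      0 < ∫ p in HP, ‖w p‖ ^ 2 → Λ * ∫ p in HP, ‖w p‖ ^ 2 ≤ EM c σ τ w)
    {v : ℝ → ℂ} (hv : ContDiff ℝ (⊤ : ℕ∞) v) (hvc : HasCompactSupport v)
    (hpos : 0 < ∫ t in Ioi (0 : ℝ), ‖v t‖ ^ 2) :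
    Λ * ∫ t in Ioi (0 : ℝ), ‖v t‖ ^ 2 ≤ (∫ t in Ioi (0 : ℝ),
          ‖deriv v t‖ ^ 2 + (t - (ξ * c + τ * σ)) ^ 2 * ‖v t‖ ^ 2)
        + (ξ * σ - τ * c) ^ 2 * ∫ t in Ioi (0 : ℝ), ‖v t‖ ^ 2 := by
  set V := ∫ t in Ioi (0 : ℝ), ‖v t‖ ^ 2 with hV
  refine le_of_forall_pos_le_add fun ε hε => ?_
  obtain ⟨χ, hχ, hχc, hX, hY⟩ := exists_cutoff_eps (div_pos hε hpos)
  have h := hΛ (trial ξ χ v) (trial_smooth ξ hχ hv) (trial_compact ξ hχc hvc)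
  rw [trial_norm, trial_energy c σ τ ξ hcs hχ hχc hv hvc, ← hV] at h
  have h := h (by positivity)
  set X := ∫ s, χ s ^ 2
  have hY2 := mul_le_mul_of_nonneg_right hY hpos.le
  have : ε / V * X * V = X * ε := by field_simp
  rw [this] at hY2
  refine le_of_mul_le_mul_left ?_ hX
  linarith

lemma exists_v : ∃ v : ℝ → ℂ, ContDiff ℝ (⊤ : ℕ∞) v ∧ HasCompactSupport v ∧
    0 < ∫ t in Ioi (0 : ℝ), ‖v t‖ ^ 2 := by
  let f : ContDiffBump (1 : ℝ) := ⟨1/4, 1/2, by norm_num, by norm_num⟩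
  have hs : ContDiff ℝ (⊤ : ℕ∞) f := f.contDiff
  have hc : HasCompactSupport f := f.hasCompactSupport
  refine ⟨fun t => (f t : ℂ), Complex.ofRealCLM.contDiff.comp hs,
    hc.comp_left (g := fun z : ℝ => (z : ℂ)) (by simp), ?_⟩
  simp only [Complex.norm_real, Real.norm_eq_abs, sq_abs]
  rw [setIntegral_eq_integral_of_forall_compl_eq_zero]
  · have h1 : HasCompactSupport (fun s => f s ^ 2) :=
      hc.comp_left (g := fun z : ℝ => z ^ 2) (by simp)
    have h2 : Continuous (fun s => f s ^ 2) := hs.continuous.pow 2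
    refine h2.integral_pos_of_hasCompactSupport_nonneg_nonzero h1 (fun s => by positivity)
      (x := 1) ?_
    have : f 1 = 1 := f.one_of_mem_closedBall (by simp [f])
    simp [this]
  · intro t ht
    have : f t = 0 := f.zero_of_le_dist (by
      have : t ≤ 0 := by simpa using ht
      rw [Real.dist_eq, abs_of_nonpos (by linarith)]
      simp only [f]; linarith)
    simp [this]

/-- the reflection `(s,t) ↦ s e + t n` -/
def refl (a : ℝ) : ℝ × ℝ →L[ℝ] ℝ × ℝ :=
  (cos a • ContinuousLinearMap.fst ℝ ℝ ℝ + sin a • ContinuousLinearMap.snd ℝ ℝ ℝ).prod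
    (sin a • ContinuousLinearMap.fst ℝ ℝ ℝ - cos a • ContinuousLinearMap.snd ℝ ℝ ℝ)

lemma refl_apply (a : ℝ) (p : ℝ × ℝ) :
    refl a p = (cos a * p.1 + sin a * p.2, sin a * p.1 - cos a * p.2) := by
  simp [refl]

lemma refl_refl (a : ℝ) (p : ℝ × ℝ) : refl a (refl a p) = p := by
  have := sin_sq_add_cos_sq a
  rw [refl_apply, refl_apply]
  ext
  · simp only; linear_combination p.1 * this
  · simp only; linear_combination p.2 * this

lemma refl_mp (a : ℝ) : MeasurePreserving (refl a) := by
  have hd : LinearMap.det (refl a : ℝ × ℝ →ₗ[ℝ] ℝ × ℝ) * LinearMap.det (refl a : ℝ × ℝ →ₗ[ℝ] ℝ × ℝ)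
      = 1 := by
    rw [← LinearMap.det_comp]
    have : (refl a : ℝ × ℝ →ₗ[ℝ] ℝ × ℝ) ∘ₗ (refl a : ℝ × ℝ →ₗ[ℝ] ℝ × ℝ) = LinearMap.id :=
      LinearMap.ext fun p => refl_refl a p
    rw [this, LinearMap.det_id]
  have hne : LinearMap.det (refl a : ℝ × ℝ →ₗ[ℝ] ℝ × ℝ) ≠ 0 := fun h => by simp [h] at hd
  have habs : |(LinearMap.det (refl a : ℝ × ℝ →ₗ[ℝ] ℝ × ℝ))⁻¹| = 1 := by
    rcases mul_self_eq_one_iff.1 hd with h | h <;> simp [h]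
  refine ⟨(refl a).continuous.measurable, ?_⟩
  have := Measure.map_linearMap_addHaar_eq_smul_addHaar (volume : Measure (ℝ × ℝ)) hne
  rw [habs, ENNReal.ofReal_one, one_smul] at this
  exact this

/-- as a homeomorphism -/
def reflH (a : ℝ) : ℝ × ℝ ≃ₜ ℝ × ℝ where
  toFun := refl a
  invFun := refl a
  left_inv := refl_refl a
  right_inv := refl_refl a
  continuous_toFun := (refl a).continuous
  continuous_invFun := (refl a).continuous

lemma integral_refl (a : ℝ) (ha : 0 < cos a) {Ω : Set (ℝ × ℝ)}
    (hΩ : Ω = {x | x.2 < x.1 * Real.tan a}) (f : ℝ × ℝ → ℝ) :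
    ∫ x in Ω, f x = ∫ p in HP, f (refl a p) := by
  have hpre : HP = refl a ⁻¹' Ω := by
    ext p
    have := sin_sq_add_cos_sq a
    simp only [HP, hΩ, mem_prod, mem_univ, true_and, mem_Ioi, mem_preimage, mem_ofPred_eq,
      refl_apply]
    rw [Real.tan_eq_sin_div_cos, ← mul_div_assoc, lt_div_iff₀ ha]
    have : (cos a * p.1 + sin a * p.2) * sin a - (sin a * p.1 - cos a * p.2) * cos a = p.2 := by
      linear_combination p.2 * this
    constructor <;> intro h <;> linarith
  rw [hpre]
  exact ((refl_mp a).setIntegral_preimage_emb (reflH a).measurableEmbedding f Ω).symm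

/-- the gauge phase -/
def ph (a c : ℝ) (p : ℝ × ℝ) : ℝ :=
  c * (sin a ^ 2 * (p.1 * p.2) + sin a * cos a * (p.1 ^ 2 - p.2 ^ 2) / 2)

lemma ph_smooth (a c : ℝ) : ContDiff ℝ (⊤ : ℕ∞) (ph a c) := by
  unfold ph
  fun_prop

/-- gauge transformed function -/
def gt (a c : ℝ) (u : ℝ × ℝ → ℂ) (p : ℝ × ℝ) : ℂ :=
  Complex.exp ((ph a c p : ℝ) * Complex.I) * u (refl a p)

lemma gt_smooth (a c : ℝ) {u : ℝ × ℝ → ℂ} (hu : ContDiff ℝ (⊤ : ℕ∞) u) :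
    ContDiff ℝ (⊤ : ℕ∞) (gt a c u) :=
  (smooth_exp_ofReal (ph_smooth a c)).mul (hu.comp (refl a).contDiff)

lemma gt_compact (a c : ℝ) {u : ℝ × ℝ → ℂ} (hu : HasCompactSupport u) :
    HasCompactSupport (gt a c u) :=
  (hu.comp_homeomorph (reflH a)).mul_left

/-- inverse gauge transform -/
def gti (a c : ℝ) (w : ℝ × ℝ → ℂ) (x : ℝ × ℝ) : ℂ :=
  Complex.exp (((-ph a c (refl a x) : ℝ)) * Complex.I) * w (refl a x)

lemma gti_smooth (a c : ℝ) {u : ℝ × ℝ → ℂ} (hu : ContDiff ℝ (⊤ : ℕ∞) u) :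
    ContDiff ℝ (⊤ : ℕ∞) (gti a c u) :=
  (smooth_exp_ofReal ((ph_smooth a c).comp (refl a).contDiff).neg).mul (hu.comp (refl a).contDiff)

lemma gti_compact (a c : ℝ) {u : ℝ × ℝ → ℂ} (hu : HasCompactSupport u) :
    HasCompactSupport (gti a c u) :=
  (hu.comp_homeomorph (reflH a)).mul_left

lemma gt_gti (a c : ℝ) (w : ℝ × ℝ → ℂ) : gt a c (gti a c w) = w := by
  ext p
  rw [gt, gti, refl_refl, ← mul_assoc, ← Complex.exp_add]
  simp

lemma gt_norm (a c : ℝ) (u : ℝ × ℝ → ℂ) (p : ℝ × ℝ) : ‖gt a c u p‖ = ‖u (refl a p)‖ := by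
  rw [gt, norm_mul, norm_exp_I, one_mul]

lemma gt_d (a c : ℝ) {u : ℝ × ℝ → ℂ} (hu : ContDiff ℝ (⊤ : ℕ∞) u) (p v : ℝ × ℝ) :
    fderiv ℝ (gt a c u) p v = Complex.exp ((ph a c p : ℝ) * Complex.I) *
      (Complex.I * (fderiv ℝ (ph a c) p v : ℝ) * u (refl a p)
        + fderiv ℝ u (refl a p) (refl a v)) := by
  have h1 : HasFDerivAt (ph a c) (fderiv ℝ (ph a c) p) p :=
    ((ph_smooth a c).differentiable (by simp) p).hasFDerivAt
  have h2 : HasFDerivAt (fun p => u (refl a p)) ((fderiv ℝ u (refl a p)).comp (refl a)) p :=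
    ((hu.differentiable (by simp) _).hasFDerivAt).comp p (refl a).hasFDerivAt
  have h3 : HasFDerivAt (fun p => ((ph a c p : ℝ) : ℂ)) (Complex.ofRealCLM.comp
      (fderiv ℝ (ph a c) p)) p := Complex.ofRealCLM.hasFDerivAt.comp p h1
  have h4 := ((h3.mul_const Complex.I).cexp).mul h2
  have : fderiv ℝ (gt a c u) p = _ := h4.fderiv
  rw [this]
  simp
  ring

lemma ph_d (a c : ℝ) (p v : ℝ × ℝ) : fderiv ℝ (ph a c) p v =
    c * (sin a ^ 2 * (v.1 * p.2 + p.1 * v.2) + sin a * cos a * (p.1 * v.1 - p.2 * v.2)) := by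
  have h1 : HasFDerivAt (fun p : ℝ × ℝ => p.1) (ContinuousLinearMap.fst ℝ ℝ ℝ) p := hasFDerivAt_fst
  have h2 : HasFDerivAt (fun p : ℝ × ℝ => p.2) (ContinuousLinearMap.snd ℝ ℝ ℝ) p := hasFDerivAt_snd
  have h := ((((h1.mul h2).const_mul (sin a ^ 2)).add
    ((((h1.pow 2).sub (h2.pow 2)).const_mul (sin a * cos a)).mul_const (2⁻¹ : ℝ))).const_mul c)
  have : fderiv ℝ (ph a c) p = _ := h.fderiv
  rw [this]
  simp
  ring

/-- pointwise rotation identity -/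
lemma rot_norm (C S : ℝ) (h : S ^ 2 + C ^ 2 = 1) (x y : ℂ) :
    ‖(C : ℂ) * x + S * y‖ ^ 2 + ‖(S : ℂ) * x - C * y‖ ^ 2 = ‖x‖ ^ 2 + ‖y‖ ^ 2 := by
  simp only [← Complex.normSq_eq_norm_sq, Complex.normSq_apply]
  simp
  linear_combination (x.re ^ 2 + x.im ^ 2 + y.re ^ 2 + y.im ^ 2) * h

lemma gt_density (a c : ℝ) {u : ℝ × ℝ → ℂ} (hu : ContDiff ℝ (⊤ : ℕ∞) u) (p : ℝ × ℝ) :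
    ‖(-Complex.I) * fderiv ℝ (gt a c u) p (1, 0) - ((p.2 * c : ℝ) : ℂ) * gt a c u p‖ ^ 2
      + ‖fderiv ℝ (gt a c u) p (0, 1)‖ ^ 2
    = ‖(-Complex.I) * fderiv ℝ u (refl a p) (1, 0) + (((refl a p).2 * c : ℝ) : ℂ) * u (refl a p)‖ ^ 2
      + ‖fderiv ℝ u (refl a p) (0, 1)‖ ^ 2 := by
  have hsc := sin_sq_add_cos_sq a
  have hscC : (sin a : ℂ) ^ 2 + (cos a : ℂ) ^ 2 = 1 := by exact_mod_cast hsc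
  set x := refl a p with hx
  set d1 := fderiv ℝ u x (1, 0) with hd1
  set d2 := fderiv ℝ u x (0, 1) with hd2
  have hlin : ∀ α β : ℝ, fderiv ℝ u x (α, β) = α * d1 + β * d2 := by
    intro α β
    have : ((α, β) : ℝ × ℝ) = α • ((1 : ℝ), (0 : ℝ)) + β • ((0 : ℝ), (1 : ℝ)) := by simp
    rw [this, map_add, map_smul, map_smul]
    simp [hd1, hd2]
  have r1 : refl a (1, 0) = (cos a, sin a) := by simp [refl_apply]
  have r2 : refl a (0, 1) = (sin a, -cos a) := by simp [refl_apply]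
  have hx2 : x.2 = sin a * p.1 - cos a * p.2 := by rw [hx, refl_apply]
  set D1 := (-Complex.I) * d1 + ((x.2 * c : ℝ) : ℂ) * u x with hD1
  set D2 := (-Complex.I) * d2 with hD2
  have n2 : ‖d2‖ = ‖D2‖ := by simp [hD2]
  have e1 : (-Complex.I) * fderiv ℝ (gt a c u) p (1, 0) - ((p.2 * c : ℝ) : ℂ) * gt a c u p
      = Complex.exp ((ph a c p : ℝ) * Complex.I) * ((cos a : ℝ) * D1 + (sin a : ℝ) * D2) := by
    rw [gt_d a c hu, ph_d, r1, ← hx, hlin, gt, ← hx, hD1, hD2, hx2]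
    push_cast [-Complex.ofReal_sin, -Complex.ofReal_cos]
    generalize Complex.exp ((ph a c p : ℂ) * Complex.I) = e
    linear_combination (-e * u x * (c * (sin a ^ 2 * p.2 + sin a * cos a * p.1))) * Complex.I_sq
      + (e * u x * c * p.2) * hscC
  have e2 : (-Complex.I) * fderiv ℝ (gt a c u) p (0, 1)
      = Complex.exp ((ph a c p : ℝ) * Complex.I) * ((sin a : ℝ) * D1 - (cos a : ℝ) * D2) := by
    rw [gt_d a c hu, ph_d, r2, ← hx, hlin, hD1, hD2, hx2]
    push_cast [-Complex.ofReal_sin, -Complex.ofReal_cos]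
    generalize Complex.exp ((ph a c p : ℂ) * Complex.I) = e
    linear_combination (-e * u x * (c * (sin a ^ 2 * p.1 - sin a * cos a * p.2))) * Complex.I_sq
  have n3 : ‖fderiv ℝ (gt a c u) p (0, 1)‖ = ‖(-Complex.I) * fderiv ℝ (gt a c u) p (0, 1)‖ := by
    simp
  rw [n3, e1, e2, n2, norm_mul, norm_mul, norm_exp_I, one_mul, one_mul]
  exact rot_norm _ _ hsc D1 D2

lemma norm2D_eq (α c : ℝ) (hcos : 0 < cos (α / 2)) (u : ℝ × ℝ → ℂ) :
    norm2D (hpUp α) u = ∫ p in HP, ‖gt (α / 2) c u p‖ ^ 2 := by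
  rw [norm2D, integral_refl (α / 2) (Ω := hpUp α) hcos rfl]
  simp_rw [gt_norm]

lemma energy2D_eq (α c σ τ : ℝ) (hcos : 0 < cos (α / 2)) {u : ℝ × ℝ → ℂ}
    (hu : ContDiff ℝ (⊤ : ℕ∞) u) :
    energy2D (hpUp α) (σ * cos (α / 2)) (σ * sin (α / 2)) c τ u = EM c σ τ (gt (α / 2) c u) := by
  rw [energy2D, integral_refl (α / 2) (Ω := hpUp α) hcos rfl, EM]
  congr 1
  ext p
  rw [gt_density _ _ hu, gt_norm]
  have : (refl (α / 2) p).1 * (σ * sin (α / 2)) - (refl (α / 2) p).2 * (σ * cos (α / 2)) = p.2 * σ := by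
    rw [refl_apply]
    simp only
    linear_combination (p.2 * σ) * sin_sq_add_cos_sq (α / 2)
  rw [this]

end MagWedge

open MagWedge in
/-- the bottom of the spectrum on the upper half-plane `Hp^up`. -/
theorem specInf_hpUp_eq (α γ τ : ℝ) (hα : α ∈ Set.Ioo 0 π) (hγ : γ ∈ Set.Icc 0 (π / 2)) :
    specInf2D (hpUp α)
        (Real.sin γ * Real.cos (α / 2)) (Real.sin γ * Real.sin (α / 2)) (Real.cos γ) τ
      = ⨅ ξ : ℝ, (deGennes (ξ * Real.cos γ + τ * Real.sin γ)
          + (ξ * Real.sin γ - τ * Real.cos γ) ^ 2) := by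
  have hcos : 0 < cos (α / 2) := by
    obtain ⟨h1, h2⟩ := hα
    exact Real.cos_pos_of_mem_Ioo ⟨by linarith, by linarith⟩
  have hcs := Real.cos_sq_add_sin_sq γ
  set c := Real.cos γ
  set σ := Real.sin γ
  have hbdd : BddBelow { r : ℝ | ∃ u : ℝ × ℝ → ℂ, ContDiff ℝ (⊤ : ℕ∞) u ∧ HasCompactSupport u ∧
      0 < norm2D (hpUp α) u ∧ r = energy2D (hpUp α) (σ * Real.cos (α / 2))
        (σ * Real.sin (α / 2)) c τ u / norm2D (hpUp α) u } := by
    refine ⟨0, ?_⟩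
    rintro r ⟨u, -, -, h, rfl⟩
    exact div_nonneg (integral_nonneg fun x => by positivity) h.le
  have hbdd2 : BddBelow (range fun ξ : ℝ => (deGennes (ξ * c + τ * σ)
      + (ξ * σ - τ * c) ^ 2)) := by
    refine ⟨0, ?_⟩
    rintro _ ⟨ξ, rfl⟩
    exact add_nonneg (deGennes_nonneg _) (sq_nonneg _)
  obtain ⟨v, hv, hvc, hvpos⟩ := exists_v
  apply le_antisymm
  · refine le_ciInf fun ξ => ?_
    rw [← sub_le_iff_le_add]
    refine le_csInf ⟨_, v, hv, hvc, hvpos, rfl⟩ ?_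
    rintro r ⟨v, hv, hvc, hvpos, rfl⟩
    rw [le_div_iff₀ hvpos, sub_mul, sub_le_iff_le_add]
    refine upper c σ τ _ ξ hcs (fun w hw hwc hpos => ?_) hv hvc hvpos
    have hn := norm2D_eq α c hcos (gti (α / 2) c w)
    have he := energy2D_eq α c σ τ hcos (gti_smooth (α / 2) c hw)
    rw [gt_gti] at hn he
    rw [← hn] at hpos ⊢
    rw [← he, ← le_div_iff₀ hpos]
    exact csInf_le hbdd ⟨_, gti_smooth (α / 2) c hw, gti_compact (α / 2) c hwc, hpos, rfl⟩
  · obtain ⟨χ, hχ, hχc, hX⟩ := exists_cutoff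
    refine le_csInf ⟨_, gti (α / 2) c (trial 0 χ v), gti_smooth _ _ (trial_smooth 0 hχ hv),
      gti_compact _ _ (trial_compact 0 hχc hvc), ?_, rfl⟩ ?_
    · rw [norm2D_eq α c hcos, gt_gti, trial_norm]
      positivity
    · rintro r ⟨u, hu, huc, hpos, rfl⟩
      rw [le_div_iff₀ hpos, norm2D_eq α c hcos, energy2D_eq α c σ τ hcos hu]
      exact lower c σ τ _ hcs (fun ξ => ciInf_le hbdd2 ξ) (gt_smooth _ _ hu) (gt_compact _ _ huc)
end
end

section
/- Let α ∈ (0,π), γ ∈ (0,π/2], B = (sin γ·cos(α/2), sin γ·sin(α/2), cos γ) = (b₁,b₂,b₃). Let Hp^low := {(x₁,x₂) ∈ ℝ² : x₂ > −x₁·tan(α/2)}. Then for every τ ∈ ℝ, the infimum, over all smooth compactly supported u : ℝ² → ℂ with ∫_{Hp^low}|u|² > 0, of (∫_{Hp^low} |(−i∂₁ + x₂b₃)u|² + |∂₂u|² + (x₁b₂ − x₂b₁ − τ)²|u|² dx)/(∫_{Hp^low}|u|² dx) equals σ(arcsin(sin α·sin γ)); in particular this infimum does not depend on τ. -/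
open Real MeasureTheory Set Filter

noncomputable section

namespace MagWedge

/-! ### The rotation of the half-space -/

/-- The rotation from model coordinates `(s,t,z)` to `((x₁,x₂),x₃)`. -/
def rotEquiv (c d p q : ℝ) (h1 : c ^ 2 + d ^ 2 = 1) (h2 : p ^ 2 + q ^ 2 = 1) :
    (ℝ × ℝ × ℝ) ≃L[ℝ] ((ℝ × ℝ) × ℝ) :=
  LinearEquiv.toContinuousLinearEquiv
  { toFun := fun y => ((y.1 * (p * c) + y.2.1 * d - y.2.2 * (q * c),
        -(y.1 * (p * d)) + y.2.1 * c + y.2.2 * (q * d)), y.1 * q + y.2.2 * p)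
    map_add' := by
      intro x y
      ext <;> simp <;> ring
    map_smul' := by
      intro x y
      ext <;> simp <;> ring
    invFun := fun x => (p * c * x.1.1 - p * d * x.1.2 + q * x.2, d * x.1.1 + c * x.1.2,
        -(q * c * x.1.1) + q * d * x.1.2 + p * x.2)
    left_inv := by
      rintro ⟨s, t, z⟩
      ext
      · simp only
        linear_combination (p ^ 2 * s - p * q * z) * h1 + s * h2
      · simp only
        linear_combination t * h1
      · simp only
        linear_combination (q ^ 2 * z - p * q * s) * h1 + z * h2
    right_inv := by
      rintro ⟨⟨x, y⟩, z⟩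
      ext
      · simp only
        linear_combination (c ^ 2 * x - c * d * y) * h2 + x * h1
      · simp only
        linear_combination (d ^ 2 * y - c * d * x) * h2 + y * h1
      · simp only
        linear_combination z * h2 }

theorem rotEquiv_apply (c d p q : ℝ) (h1 : c ^ 2 + d ^ 2 = 1) (h2 : p ^ 2 + q ^ 2 = 1)
    (y : ℝ × ℝ × ℝ) : rotEquiv c d p q h1 h2 y =
      ((y.1 * (p * c) + y.2.1 * d - y.2.2 * (q * c),
        -(y.1 * (p * d)) + y.2.1 * c + y.2.2 * (q * d)), y.1 * q + y.2.2 * p) := rfl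

/-- A quadratic phase. -/
def quadPhase (m11 m22 m33 m12 m13 m23 : ℝ) (y : ℝ × ℝ × ℝ) : ℝ :=
  (m11 * y.1 ^ 2 + m22 * y.2.1 ^ 2 + m33 * y.2.2 ^ 2) / 2
    + m12 * (y.1 * y.2.1) + m13 * (y.1 * y.2.2) + m23 * (y.2.1 * y.2.2)

theorem quadPhase_contDiff (m11 m22 m33 m12 m13 m23 : ℝ) :
    ContDiff ℝ (⊤ : ℕ∞) (quadPhase m11 m22 m33 m12 m13 m23) := by
  unfold quadPhase
  fun_prop

theorem quadPhase_hasFDerivAt (m11 m22 m33 m12 m13 m23 : ℝ) (y h : ℝ × ℝ × ℝ) :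
    fderiv ℝ (quadPhase m11 m22 m33 m12 m13 m23) y h =
      h.1 * (m11 * y.1 + m12 * y.2.1 + m13 * y.2.2)
      + h.2.1 * (m12 * y.1 + m22 * y.2.1 + m23 * y.2.2)
      + h.2.2 * (m13 * y.1 + m23 * y.2.1 + m33 * y.2.2) := by
  have e1 : HasFDerivAt (fun y : ℝ × ℝ × ℝ => y.1) (ContinuousLinearMap.fst ℝ ℝ (ℝ × ℝ)) y :=
    hasFDerivAt_fst
  have e2 : HasFDerivAt (fun y : ℝ × ℝ × ℝ => y.2.1)
      ((ContinuousLinearMap.fst ℝ ℝ ℝ).comp (ContinuousLinearMap.snd ℝ ℝ (ℝ × ℝ))) y :=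
    hasFDerivAt_fst.comp y hasFDerivAt_snd
  have e3 : HasFDerivAt (fun y : ℝ × ℝ × ℝ => y.2.2)
      ((ContinuousLinearMap.snd ℝ ℝ ℝ).comp (ContinuousLinearMap.snd ℝ ℝ (ℝ × ℝ))) y :=
    hasFDerivAt_snd.comp y hasFDerivAt_snd
  have key := (((((((e1.pow 2).const_mul m11).add ((e2.pow 2).const_mul m22)).add
    ((e3.pow 2).const_mul m33)).mul_const (1/2 : ℝ)).add ((e1.mul e2).const_mul m12)).add
    ((e1.mul e3).const_mul m13)).add ((e2.mul e3).const_mul m23)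
  have : HasFDerivAt (quadPhase m11 m22 m33 m12 m13 m23) _ y :=
    key.congr_of_eventuallyEq (Eventually.of_forall fun y => by
      simp [quadPhase]; ring)
  rw [this.fderiv]
  simp
  ring

/-- Energy density in three dimensions, in coordinates `((x₁,x₂),x₃)`. -/
def dens3 (b1 b2 b3 : ℝ) (w : (ℝ × ℝ) × ℝ → ℂ) (x : (ℝ × ℝ) × ℝ) : ℝ :=
  ‖(-Complex.I) * fderiv ℝ w x ((1, 0), 0) + ((x.1.2 * b3 : ℝ) : ℂ) * w x‖ ^ 2
    + ‖fderiv ℝ w x ((0, 1), 0)‖ ^ 2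
    + ‖(-Complex.I) * fderiv ℝ w x ((0, 0), 1) + ((x.1.1 * b2 - x.1.2 * b1 : ℝ) : ℂ) * w x‖ ^ 2

/-- Energy density of the model. -/
def densM (tc ts : ℝ) (u : ℝ × ℝ × ℝ → ℂ) (x : ℝ × ℝ × ℝ) : ℝ :=
  ‖fderiv ℝ u x (1, 0, 0)‖ ^ 2 + ‖fderiv ℝ u x (0, 1, 0)‖ ^ 2
            + ‖(-Complex.I) * fderiv ℝ u x (0, 0, 1)
                - ((x.2.1 * tc : ℝ) : ℂ) * u x
                + ((x.1 * ts : ℝ) : ℂ) * u x‖ ^ 2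

theorem orth_sum (c d p q : ℝ) (h1 : c ^ 2 + d ^ 2 = 1) (h2 : p ^ 2 + q ^ 2 = 1)
    (V1 V2 V3 : ℂ) :
    ‖(p * c : ℝ) * V1 - (p * d : ℝ) * V2 + (q : ℝ) * V3‖ ^ 2
      + ‖(d : ℝ) * V1 + (c : ℝ) * V2‖ ^ 2
      + ‖-((q * c : ℝ) * V1) + (q * d : ℝ) * V2 + (p : ℝ) * V3‖ ^ 2
      = ‖V1‖ ^ 2 + ‖V2‖ ^ 2 + ‖V3‖ ^ 2 := by
  simp only [← Complex.normSq_eq_norm_sq, Complex.normSq_apply]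
  simp
  have hd : d ^ 2 = 1 - c ^ 2 := by linarith
  have hq : q ^ 2 = 1 - p ^ 2 := by linarith
  ring_nf
  simp only [hd, hq]
  ring

theorem density_eq (c d p q S C tc ts : ℝ) (h1 : c ^ 2 + d ^ 2 = 1) (h2 : p ^ 2 + q ^ 2 = 1)
    (h3 : p * tc = S * (c ^ 2 - d ^ 2)) (h4 : q * tc = C) (h5 : ts = 2 * S * c * d)
    (w : (ℝ × ℝ) × ℝ → ℂ) (hw : Differentiable ℝ w) (y : ℝ × ℝ × ℝ) :
    densM tc ts (fun y => Complex.exp (Complex.I * (quadPhase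
      (-(p ^ 2 * c * d * C) + p * q * ts) (c * d * C) (-(q ^ 2 * c * d * C) - p * q * ts)
      (p * c ^ 2 * C - q * S * (c ^ 2 - d ^ 2)) (p * q * c * d * C - q ^ 2 * ts)
      (q * d ^ 2 * C) y : ℝ)) * w (rotEquiv c d p q h1 h2 y)) y
    = dens3 (S * c) (S * d) C w (rotEquiv c d p q h1 h2 y) := by
  set φ := quadPhase
      (-(p ^ 2 * c * d * C) + p * q * ts) (c * d * C) (-(q ^ 2 * c * d * C) - p * q * ts)
      (p * c ^ 2 * C - q * S * (c ^ 2 - d ^ 2)) (p * q * c * d * C - q ^ 2 * ts)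
      (q * d ^ 2 * C) with hφ
  set T := rotEquiv c d p q h1 h2 with hT
  have hφd : HasFDerivAt φ (fderiv ℝ φ y) y :=
    ((quadPhase_contDiff _ _ _ _ _ _).differentiable (by simp) y).hasFDerivAt
  have hE : HasFDerivAt (fun y => Complex.exp (Complex.I * (φ y : ℝ))) _ y :=
    ((Complex.ofRealCLM.hasFDerivAt.comp y hφd).const_mul Complex.I).cexp
  have hW : HasFDerivAt (fun y => w (T y)) _ y :=
    (hw (T y)).hasFDerivAt.comp y T.hasFDerivAt
  have hU := hE.mul hW
  have hd : ∀ h, fderiv ℝ (fun y => Complex.exp (Complex.I * (φ y : ℝ)) * w (T y)) y h =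
      Complex.exp (Complex.I * (φ y : ℝ)) *
        (fderiv ℝ w (T y) (T h) + Complex.I * (fderiv ℝ φ y h : ℝ) * w (T y)) := by
    intro h
    have : fderiv ℝ (fun y => Complex.exp (Complex.I * (φ y : ℝ)) * w (T y)) y = _ := hU.fderiv
    rw [this]
    simp
    ring
  have hn : ‖Complex.exp (Complex.I * (φ y : ℝ))‖ = 1 := by
    rw [mul_comm]; exact Complex.norm_exp_ofReal_mul_I _
  have hlin : ∀ a b e : ℝ, fderiv ℝ w (T y) ((a, b), e) =
      a * fderiv ℝ w (T y) ((1, 0), 0) + b * fderiv ℝ w (T y) ((0, 1), 0)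
        + e * fderiv ℝ w (T y) ((0, 0), 1) := by
    intro a b e
    have : (((a, b), e) : (ℝ × ℝ) × ℝ) = a • ((1, 0), 0) + b • ((0, 1), 0) + e • ((0, 0), 1) := by
      ext <;> simp
    rw [this, map_add, map_add, map_smul, map_smul, map_smul]
    simp
  rw [densM, dens3]
  set W1 := fderiv ℝ w (T y) ((1, 0), 0)
  set W2 := fderiv ℝ w (T y) ((0, 1), 0)
  set W3 := fderiv ℝ w (T y) ((0, 0), 1)
  set E := Complex.exp (Complex.I * (φ y : ℝ))
  set w0 := w (T y)
  have t1 : T (1, 0, 0) = ((p * c, -(p * d)), q) := by rw [hT, rotEquiv_apply]; simp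
  have t2 : T (0, 1, 0) = ((d, c), 0) := by rw [hT, rotEquiv_apply]; simp
  have t3 : T (0, 0, 1) = ((-(q * c), q * d), p) := by rw [hT, rotEquiv_apply]; simp
  have ty : T y = _ := rotEquiv_apply c d p q h1 h2 y
  simp only [hd, t1, t2, t3, hlin]
  rw [hφ]
  simp only [quadPhase_hasFDerivAt]
  obtain ⟨s, t, z⟩ := y
  have ty1 : (T (s, t, z)).1.1 = s * (p * c) + t * d - z * (q * c) := by rw [ty]
  have ty2 : (T (s, t, z)).1.2 = -(s * (p * d)) + t * c + z * (q * d) := by rw [ty]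
  rw [ty1, ty2]
  have fs : 1 * ((-(p ^ 2 * c * d * C) + p * q * ts) * s +
      (p * c ^ 2 * C - q * S * (c ^ 2 - d ^ 2)) * t + (p * q * c * d * C - q ^ 2 * ts) * z)
      = p * c * ((-(s * (p * d)) + t * c + z * (q * d)) * C) +
        q * ((s * (p * c) + t * d - z * (q * c)) * (S * d)
          - (-(s * (p * d)) + t * c + z * (q * d)) * (S * c)) := by
    rw [h5]; ring
  have hpC : p * C = q * (S * (c ^ 2 - d ^ 2)) := by rw [← h4, ← h3]; ring
  have ft : (p * c ^ 2 * C - q * S * (c ^ 2 - d ^ 2)) * s + c * d * C * t + q * d ^ 2 * C * z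
      = d * ((-(s * (p * d)) + t * c + z * (q * d)) * C) := by
    linear_combination s * hpC + s * p * C * h1
  have fz : (p * q * c * d * C - q ^ 2 * ts) * s + q * d ^ 2 * C * t +
      (-(q ^ 2 * c * d * C) - p * q * ts) * z
      = -(q * c * ((-(s * (p * d)) + t * c + z * (q * d)) * C)) +
        p * ((s * (p * c) + t * d - z * (q * c)) * (S * d)
          - (-(s * (p * d)) + t * c + z * (q * d)) * (S * c)) + t * tc - s * ts := by
    rw [h5]
    have hC2 : q * C + p * (S * (c ^ 2 - d ^ 2)) = tc := by
      rw [← h4, ← h3]; linear_combination tc * h2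
    linear_combination t * hC2 + t * q * C * h1 - 2 * S * c * d * s * h2
  simp only [zero_mul, add_zero, zero_add, one_mul] at fs ⊢
  rw [fs, ft, fz]
  generalize (-(s * (p * d)) + t * c + z * (q * d)) * C = X
  generalize (s * (p * c) + t * d - z * (q * c)) * (S * d)
          - (-(s * (p * d)) + t * c + z * (q * d)) * (S * c) = Y
  have nI : ∀ z : ℂ, ‖z‖ = ‖-Complex.I * z‖ := by intro z; simp
  have nE : ∀ z : ℂ, ‖E * z‖ = ‖z‖ := by intro z; rw [norm_mul, hn, one_mul]
  rw [nE, nE, nI W2, ← orth_sum c d p q h1 h2 (-Complex.I * W1 + (X : ℝ) * w0)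
    (-Complex.I * W2) (-Complex.I * W3 + (Y : ℝ) * w0)]
  have hI := Complex.I_sq
  congr 1
  · congr 1
    · congr 1
      rw [nI]
      congr 1
      push_cast
      linear_combination (-(p * c * X + q * Y) * w0) * hI
    · congr 1
      rw [nI]
      congr 1
      push_cast
      linear_combination (-(d * X) * w0) * hI
  · congr 1
    conv_rhs => rw [← nE]
    congr 1
    push_cast
    linear_combination (-(-(q * c * X) + p * Y + t * tc - s * ts) * w0 * E) * hI

theorem rot_integral (Ω : Set (ℝ × ℝ)) (hΩ : MeasurableSet Ω) (c d p q : ℝ)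
    (h1 : c ^ 2 + d ^ 2 = 1) (h2 : p ^ 2 + q ^ 2 = 1)
    (hdom : ∀ x : ℝ × ℝ, x ∈ Ω ↔ 0 < d * x.1 + c * x.2) :
    ∃ k : ℝ, 0 < k ∧ ∀ f : (ℝ × ℝ) × ℝ → ℝ,
      ∫ y in halfSpace3, f (rotEquiv c d p q h1 h2 y) = k * ∫ x in Ω ×ˢ (univ : Set ℝ), f x := by
  set T := rotEquiv c d p q h1 h2 with hT
  have i2 : (volume : Measure (ℝ × ℝ)).IsAddHaarMeasure :=
    Measure.prod.instIsAddHaarMeasure (volume : Measure ℝ) (volume : Measure ℝ)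
  have i3 : (volume : Measure (ℝ × ℝ × ℝ)).IsAddHaarMeasure :=
    Measure.prod.instIsAddHaarMeasure (volume : Measure ℝ) (volume : Measure (ℝ × ℝ))
  have i4 : (volume : Measure ((ℝ × ℝ) × ℝ)).IsAddHaarMeasure :=
    Measure.prod.instIsAddHaarMeasure (volume : Measure (ℝ × ℝ)) (volume : Measure ℝ)
  have hH : (volume.map T : Measure ((ℝ × ℝ) × ℝ)).IsAddHaarMeasure := T.isAddHaarMeasure_map _
  obtain ⟨k, hpos, hm⟩ : ∃ k : NNReal, 0 < k ∧
      (volume.map T : Measure ((ℝ × ℝ) × ℝ)) = k • volume :=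
    ⟨_, Measure.addHaarScalarFactor_pos_of_isAddHaarMeasure _ _,
      Measure.isAddLeftInvariant_eq_smul _ _⟩
  refine ⟨k, hpos, fun f => ?_⟩
  have hset : halfSpace3 = T ⁻¹' (Ω ×ˢ (univ : Set ℝ)) := by
    ext ⟨s, t, z⟩
    simp only [halfSpace3, mem_setOf_eq, mem_preimage, mem_prod, mem_univ, and_true, hdom]
    rw [hT, rotEquiv_apply]
    simp only
    have : d * (s * (p * c) + t * d - z * (q * c)) + c * (-(s * (p * d)) + t * c + z * (q * d))
      = t := by linear_combination t * h1
    rw [this]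
  have hemb : MeasurableEmbedding T := T.toHomeomorph.measurableEmbedding
  rw [hset, ← hemb.setIntegral_map f, hm, Measure.restrict_smul, integral_smul_nnreal_measure]
  rfl

theorem shift_test (Ω : Set (ℝ × ℝ)) (c d S C τ τ' : ℝ) (hS : S * c * d ≠ 0)
    (hΩ : ∀ (x : ℝ × ℝ) (r : ℝ), x + (r * c, -(r * d)) ∈ Ω ↔ x ∈ Ω)
    (u : ℝ × ℝ → ℂ) (hu : ContDiff ℝ (⊤ : ℕ∞) u) (huc : HasCompactSupport u) :
    ∃ u' : ℝ × ℝ → ℂ, ContDiff ℝ (⊤ : ℕ∞) u' ∧ HasCompactSupport u' ∧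
      norm2D Ω u' = norm2D Ω u ∧
      energy2D Ω (S * c) (S * d) C τ' u' = energy2D Ω (S * c) (S * d) C τ u := by
  set r : ℝ := (τ - τ') / (2 * (S * c * d)) with hr
  have hr' : r * (2 * (S * c * d)) = τ - τ' := by
    rw [hr]; exact div_mul_cancel₀ _ (mul_ne_zero two_ne_zero hS)
  set v : ℝ × ℝ := (r * c, -(r * d)) with hv
  set k : ℝ := -(r * d * C) with hk
  set E : ℝ × ℝ → ℂ := fun x => Complex.exp (Complex.I * ((k * x.1 : ℝ) : ℂ)) with hE
  have hn : ∀ x, ‖E x‖ = 1 := by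
    intro x; rw [hE]; simp only; rw [mul_comm]; exact Complex.norm_exp_ofReal_mul_I _
  have hint : ∀ f : ℝ × ℝ → ℝ, ∫ x in Ω, f (x + v) = ∫ x in Ω, f x := by
    intro f
    have hpre : (fun x => x + v) ⁻¹' Ω = Ω := by
      ext x; exact hΩ x r
    have := (measurePreserving_add_right (volume : Measure (ℝ × ℝ)) v).setIntegral_preimage_emb
      (measurableEmbedding_addRight v) f Ω
    rwa [hpre] at this
  have hEc : ContDiff ℝ (⊤ : ℕ∞) E := by
    have : ContDiff ℝ (⊤ : ℕ∞) (fun x : ℝ × ℝ => ((k * x.1 : ℝ) : ℂ)) :=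
      Complex.ofRealCLM.contDiff.comp (contDiff_const.mul contDiff_fst)
    exact (contDiff_const.mul this).cexp
  have huv : ContDiff ℝ (⊤ : ℕ∞) (fun x => u (x + v)) := hu.comp (by fun_prop)
  refine ⟨fun x => E x * u (x + v), hEc.mul huv, ?_, ?_, ?_⟩
  · have : HasCompactSupport (fun x => u (x + v)) :=
      huc.comp_homeomorph (Homeomorph.addRight v)
    exact this.mul_left
  · rw [norm2D, norm2D, ← hint (fun x => ‖u x‖ ^ 2)]
    simp only [norm_mul, hn, one_mul]
  · rw [energy2D, energy2D, ← hint (fun x =>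
      ‖(-Complex.I) * fderiv ℝ u x (1, 0) + ((x.2 * C : ℝ) : ℂ) * u x‖ ^ 2
      + ‖fderiv ℝ u x (0, 1)‖ ^ 2 + (x.1 * (S * d) - x.2 * (S * c) - τ) ^ 2 * ‖u x‖ ^ 2)]
    congr 1
    ext x
    have hEd : HasFDerivAt E _ x :=
      ((Complex.ofRealCLM.hasFDerivAt.comp x
        ((hasFDerivAt_fst (𝕜 := ℝ) (p := x)).const_mul k)).const_mul Complex.I).cexp
    have hud : HasFDerivAt (fun x => u (x + v)) (fderiv ℝ u (x + v)) x := by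
      have := (hu.differentiable (by simp) (x + v)).hasFDerivAt.comp x
        ((hasFDerivAt_id x).add_const v)
      rw [ContinuousLinearMap.comp_id] at this
      exact this
    have hd : ∀ h, fderiv ℝ (fun x => E x * u (x + v)) x h =
        E x * (fderiv ℝ u (x + v) h + Complex.I * (k * h.1 : ℝ) * u (x + v)) := by
      intro h
      have : fderiv ℝ (fun x => E x * u (x + v)) x = _ := (hEd.mul hud).fderiv
      rw [this]
      simp [hE]
      ring
    have nE : ∀ z : ℂ, ‖E x * z‖ = ‖z‖ := by intro z; rw [norm_mul, hn, one_mul]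
    simp only [hd, mul_one, mul_zero, nE]
    have e1 : (x + v).1 = x.1 + r * c := rfl
    have e2 : (x + v).2 = x.2 - r * d := by rw [sub_eq_add_neg]; rfl
    congr 1
    · congr 1
      · rw [← nE (_ + ((((x + v).2 * C : ℝ) : ℂ)) * _)]
        congr 2
        rw [e2, hk]
        push_cast
        linear_combination E x * (r * d * C) * u (x + v) * Complex.I_sq
      · simp
    · congr 2
      rw [e1, e2]
      linear_combination (-1 : ℝ) * hr'

theorem exists_cutoff_s2 (ε : ℝ) (hε : 0 < ε) : ∃ χ : ℝ → ℝ, ContDiff ℝ (⊤ : ℕ∞) χ ∧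
    HasCompactSupport χ ∧ 0 < ∫ z, χ z ^ 2 ∧ ∫ z, deriv χ z ^ 2 ≤ ε * ∫ z, χ z ^ 2 := by
  let f : ContDiffBump (0 : ℝ) := default
  have hf : ContDiff ℝ (⊤ : ℕ∞) (f : ℝ → ℝ) := f.contDiff
  have hc : HasCompactSupport (f : ℝ → ℝ) := f.hasCompactSupport
  have hpos : 0 < ∫ z, f z ^ 2 := by
    apply Continuous.integral_pos_of_hasCompactSupport_nonneg_nonzero (x := 0)
    · exact hf.continuous.pow 2
    · exact hc.comp_left (g := fun y => y ^ 2) (by simp)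
    · intro x; positivity
    · have : f 0 = 1 := f.one_of_mem_closedBall (by simp [f.rIn_pos.le])
      simp [this]
  set I0 := ∫ z, f z ^ 2 with hI0
  set I1 := ∫ z, deriv f z ^ 2 with hI1
  have hI1n : 0 ≤ I1 := integral_nonneg fun z => by positivity
  set L : ℝ := 1 + I1 / (ε * I0) with hL
  have hL1 : 1 ≤ L := by
    rw [hL]
    have : 0 ≤ I1 / (ε * I0) := by positivity
    linarith
  have hL0 : 0 < L := by linarith
  have e0 : ∫ z, f (z / L) ^ 2 = L * I0 := by
    have := Measure.integral_comp_div (fun z => f z ^ 2) L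
    rw [this, abs_of_pos hL0, smul_eq_mul]
  have hd : ∀ z, deriv (fun z => f (z / L)) z = deriv f (z / L) / L := by
    intro z
    have h1 : HasDerivAt f (deriv f (z / L)) (z / L) :=
      (hf.differentiable (by simp) _).hasDerivAt
    have := h1.comp z ((hasDerivAt_id z).div_const L)
    have h2 : deriv (fun z => f (z / L)) z = _ := this.deriv
    rw [h2]; ring
  have e1 : ∫ z, (deriv f (z / L) / L) ^ 2 = L⁻¹ * I1 := by
    have := Measure.integral_comp_div (fun z => (deriv f z / L) ^ 2) L
    rw [this, abs_of_pos hL0, smul_eq_mul]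
    simp only [div_pow, integral_div]
    rw [← hI1]; field_simp
  refine ⟨fun z => f (z / L), hf.comp (contDiff_id.div_const L), ?_, ?_, ?_⟩
  · exact hc.comp_isClosedEmbedding
      (Homeomorph.mulRight₀ L⁻¹ (inv_ne_zero hL0.ne')).isClosedEmbedding
  · rw [e0]; positivity
  · simp only [hd]
    rw [e0, e1]
    have h3 : I1 ≤ L * (ε * I0) := by
      rw [hL, add_mul, div_mul_cancel₀ _ (by positivity)]
      have : 0 < ε * I0 := by positivity
      linarith
    rw [inv_mul_le_iff₀ hL0]
    calc I1 ≤ L * (ε * I0) := h3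
      _ ≤ L * (ε * I0) * L := le_mul_of_one_le_right (by positivity) hL1
      _ = L * (ε * (L * I0)) := by ring

/-- The two-dimensional energy density. -/
def dens2 (b1 b2 b3 τ : ℝ) (u : ℝ × ℝ → ℂ) (x : ℝ × ℝ) : ℝ :=
  ‖(-Complex.I) * fderiv ℝ u x (1, 0) + ((x.2 * b3 : ℝ) : ℂ) * u x‖ ^ 2
      + ‖fderiv ℝ u x (0, 1)‖ ^ 2
      + (x.1 * b2 - x.2 * b1 - τ) ^ 2 * ‖u x‖ ^ 2

theorem dens2_integrable (b1 b2 b3 τ : ℝ) (u : ℝ × ℝ → ℂ) (hu : ContDiff ℝ (⊤ : ℕ∞) u)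
    (huc : HasCompactSupport u) : Integrable (dens2 b1 b2 b3 τ u) := by
  apply Continuous.integrable_of_hasCompactSupport
  · have h1 : Continuous (fderiv ℝ u) := hu.continuous_fderiv (by simp)
    have h2 : Continuous u := hu.continuous
    unfold dens2
    fun_prop
  · refine HasCompactSupport.intro huc.isCompact fun x hx => ?_
    have h1 : u x = 0 := image_eq_zero_of_notMem_tsupport hx
    have h2 : fderiv ℝ u x = 0 := fderiv_of_notMem_tsupport ℝ hx
    simp [dens2, h1, h2]

theorem dens3_integrable (b1 b2 b3 : ℝ) (u : (ℝ × ℝ) × ℝ → ℂ) (hu : ContDiff ℝ (⊤ : ℕ∞) u)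
    (huc : HasCompactSupport u) : Integrable (dens3 b1 b2 b3 u) := by
  apply Continuous.integrable_of_hasCompactSupport
  · have h1 : Continuous (fderiv ℝ u) := hu.continuous_fderiv (by simp)
    have h2 : Continuous u := hu.continuous
    unfold dens3
    fun_prop
  · refine HasCompactSupport.intro huc.isCompact fun x hx => ?_
    have h1 : u x = 0 := image_eq_zero_of_notMem_tsupport hx
    have h2 : fderiv ℝ u x = 0 := fderiv_of_notMem_tsupport ℝ hx
    simp [dens3, h1, h2]

theorem sq_compact {X F : Type*} [TopologicalSpace X] [T2Space X] [NormedAddCommGroup F] (u : X → F)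
    (huc : HasCompactSupport u) : HasCompactSupport (fun x => ‖u x‖ ^ 2) := by
  refine HasCompactSupport.intro huc.isCompact fun x hx => ?_
  have h1 : u x = 0 := image_eq_zero_of_notMem_tsupport hx
  simp [h1]

theorem normSq_integrable {X F : Type*} [TopologicalSpace X] [T2Space X] [MeasurableSpace X]
    [OpensMeasurableSpace X] (μ : Measure X) [IsFiniteMeasureOnCompacts μ]
    [NormedAddCommGroup F] (u : X → F)
    (hu : Continuous u) (huc : HasCompactSupport u) : Integrable (fun x => ‖u x‖ ^ 2) μ := by
  have h1 : Continuous (fun x => ‖u x‖ ^ 2) := by fun_prop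
  exact h1.integrable_of_hasCompactSupport (sq_compact u huc)

theorem upper_test (Ω : Set (ℝ × ℝ)) (b1 b2 b3 τ ε : ℝ) (hε : 0 < ε)
    (u : ℝ × ℝ → ℂ) (hu : ContDiff ℝ (⊤ : ℕ∞) u) (huc : HasCompactSupport u)
    (hpos : 0 < norm2D Ω u) :
    ∃ w : (ℝ × ℝ) × ℝ → ℂ, ContDiff ℝ (⊤ : ℕ∞) w ∧ HasCompactSupport w ∧
      0 < (∫ x in Ω ×ˢ (univ : Set ℝ), ‖w x‖ ^ 2) ∧
      (∫ x in Ω ×ˢ (univ : Set ℝ), dens3 b1 b2 b3 w x) /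
        (∫ x in Ω ×ˢ (univ : Set ℝ), ‖w x‖ ^ 2) ≤
        energy2D Ω b1 b2 b3 τ u / norm2D Ω u + ε := by
  obtain ⟨χ, hχ, hχc, hχ0, hχ1⟩ := exists_cutoff_s2 ε hε
  set E : ℝ → ℂ := fun z => Complex.exp (Complex.I * ((-τ * z : ℝ) : ℂ)) with hE
  have hn : ∀ x, ‖E x‖ = 1 := by
    intro x; rw [hE]; simp only; rw [mul_comm]; exact Complex.norm_exp_ofReal_mul_I _
  have hEc : ContDiff ℝ (⊤ : ℕ∞) E := by
    have : ContDiff ℝ (⊤ : ℕ∞) (fun x : ℝ => ((-τ * x : ℝ) : ℂ)) :=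
      Complex.ofRealCLM.contDiff.comp (contDiff_const.mul contDiff_id)
    exact (contDiff_const.mul this).cexp
  have hχC : ContDiff ℝ (⊤ : ℕ∞) (fun z => (χ z : ℂ)) := Complex.ofRealCLM.contDiff.comp hχ
  have hgC : ContDiff ℝ (⊤ : ℕ∞) (fun z => E z * (χ z : ℂ)) := hEc.mul hχC
  set w : (ℝ × ℝ) × ℝ → ℂ := fun x => u x.1 * (E x.2 * (χ x.2 : ℂ)) with hw
  have hwn : ∀ x, ‖w x‖ ^ 2 = ‖u x.1‖ ^ 2 * χ x.2 ^ 2 := by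
    intro x
    simp only [hw, norm_mul, hn, one_mul, mul_pow, Complex.norm_real, Real.norm_eq_abs, sq_abs]
  have hwd : ∀ x, dens3 b1 b2 b3 w x =
      dens2 b1 b2 b3 τ u x.1 * χ x.2 ^ 2 + ‖u x.1‖ ^ 2 * deriv χ x.2 ^ 2 := by
    rintro ⟨x, z⟩
    have hud : HasFDerivAt (fun y : (ℝ × ℝ) × ℝ => u y.1) _ (x, z) :=
      HasFDerivAt.comp (x, z) (hu.differentiable (by simp) x).hasFDerivAt
        (hasFDerivAt_fst (𝕜 := ℝ))
    have hE' : HasDerivAt E (E z * (Complex.I * ((-τ : ℝ) : ℂ))) z := by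
      have h1 : HasDerivAt (fun z : ℝ => -τ * z) (-τ) z := by
        simpa using (hasDerivAt_id z).const_mul (-τ)
      exact (h1.ofReal_comp.const_mul Complex.I).cexp
    have hχ' : HasDerivAt (fun z => (χ z : ℂ)) ((deriv χ z : ℝ) : ℂ) z :=
      ((hχ.differentiable (by simp) z).hasDerivAt).ofReal_comp
    have hg : HasDerivAt (fun z => E z * (χ z : ℂ)) _ z := hE'.mul hχ'
    have hgd : HasFDerivAt (fun y : (ℝ × ℝ) × ℝ => E y.2 * (χ y.2 : ℂ)) _ (x, z) :=
      HasFDerivAt.comp (g := fun z => E z * (χ z : ℂ)) (x, z) hg.hasFDerivAt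
        (hasFDerivAt_snd (𝕜 := ℝ))
    have hd : ∀ h, fderiv ℝ w (x, z) h = fderiv ℝ u x h.1 * (E z * (χ z : ℂ)) +
        u x * (h.2 * (E z * (Complex.I * ((-τ : ℝ) : ℂ)) * (χ z : ℂ)
          + E z * ((deriv χ z : ℝ) : ℂ))) := by
      intro h
      have : fderiv ℝ w (x, z) = _ := (hud.mul hgd).fderiv
      rw [this]
      simp
      ring
    simp only [dens3, dens2, hd]
    have e1 : w (x, z) = u x * (E z * (χ z : ℂ)) := rfl
    rw [e1]
    have a1 : -Complex.I * (fderiv ℝ u x (1, 0) * (E z * (χ z : ℂ)) + u x *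
        (((0 : ℝ) : ℂ) * (E z * (Complex.I * ((-τ : ℝ) : ℂ)) * (χ z : ℂ)
          + E z * ((deriv χ z : ℝ) : ℂ)))) + ((x.2 * b3 : ℝ) : ℂ) * (u x * (E z * (χ z : ℂ)))
        = E z * ((-Complex.I * fderiv ℝ u x (1, 0) + ((x.2 * b3 : ℝ) : ℂ) * u x) * (χ z : ℂ)) := by
      push_cast; ring
    have a2 : fderiv ℝ u x (0, 1) * (E z * (χ z : ℂ)) + u x *
        (((0 : ℝ) : ℂ) * (E z * (Complex.I * ((-τ : ℝ) : ℂ)) * (χ z : ℂ)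
          + E z * ((deriv χ z : ℝ) : ℂ)))
        = E z * (fderiv ℝ u x (0, 1) * (χ z : ℂ)) := by
      push_cast; ring
    have a0 : fderiv ℝ u x (0, 0) = 0 := by
      have : ((0, 0) : ℝ × ℝ) = 0 := rfl
      rw [this, map_zero]
    have a3 : -Complex.I * (fderiv ℝ u x (0, 0) * (E z * (χ z : ℂ)) + u x *
        (((1 : ℝ) : ℂ) * (E z * (Complex.I * ((-τ : ℝ) : ℂ)) * (χ z : ℂ)
          + E z * ((deriv χ z : ℝ) : ℂ)))) +
            ((x.1 * b2 - x.2 * b1 : ℝ) : ℂ) * (u x * (E z * (χ z : ℂ)))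
        = E z * (u x * ((((x.1 * b2 - x.2 * b1 - τ) * χ z : ℝ) : ℂ) +
          ((-(deriv χ z) : ℝ) : ℂ) * Complex.I)) := by
      rw [a0]
      push_cast
      linear_combination (E z * u x * χ z * τ) * Complex.I_sq
    rw [a1, a2, a3]
    have nn : ∀ a b : ℝ, ‖(a : ℂ) + (b : ℂ) * Complex.I‖ ^ 2 = a ^ 2 + b ^ 2 := by
      intro a b
      rw [← Complex.normSq_eq_norm_sq, Complex.normSq_add_mul_I]
    simp only [norm_mul, hn, one_mul, mul_pow, nn, Complex.norm_real, Real.norm_eq_abs, sq_abs]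
    ring
  have hN : (∫ x in Ω ×ˢ (univ : Set ℝ), ‖w x‖ ^ 2) = norm2D Ω u * ∫ z, χ z ^ 2 := by
    simp only [hwn]
    have := setIntegral_prod_mul (μ := (volume : Measure (ℝ × ℝ))) (ν := (volume : Measure ℝ))
      (fun x => ‖u x‖ ^ 2) (fun z => χ z ^ 2) Ω univ
    rw [setIntegral_univ] at this
    exact this
  have hD : (∫ x in Ω ×ˢ (univ : Set ℝ), dens3 b1 b2 b3 w x) =
      energy2D Ω b1 b2 b3 τ u * (∫ z, χ z ^ 2) + norm2D Ω u * ∫ z, deriv χ z ^ 2 := by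
    simp only [hwd]
    have t1 := setIntegral_prod_mul (μ := (volume : Measure (ℝ × ℝ))) (ν := (volume : Measure ℝ))
      (dens2 b1 b2 b3 τ u) (fun z => χ z ^ 2) Ω univ
    have t2 := setIntegral_prod_mul (μ := (volume : Measure (ℝ × ℝ))) (ν := (volume : Measure ℝ))
      (fun x => ‖u x‖ ^ 2) (fun z => deriv χ z ^ 2) Ω univ
    rw [setIntegral_univ] at t1 t2
    have hi0 : Integrable (fun z => χ z ^ 2) := by
      simpa using normSq_integrable volume χ hχ.continuous hχc
    have hi1 : Integrable (fun z => deriv χ z ^ 2) := by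
      simpa using normSq_integrable volume (deriv χ) (hχ.continuous_deriv (by simp)) hχc.deriv
    have j1 : Integrable (fun x : (ℝ × ℝ) × ℝ => dens2 b1 b2 b3 τ u x.1 * χ x.2 ^ 2) :=
      (dens2_integrable b1 b2 b3 τ u hu huc).mul_prod hi0
    have j2 : Integrable (fun x : (ℝ × ℝ) × ℝ => ‖u x.1‖ ^ 2 * deriv χ x.2 ^ 2) :=
      (normSq_integrable volume u hu.continuous huc).mul_prod hi1
    rw [integral_add j1.integrableOn j2.integrableOn]
    exact congrArg₂ (· + ·) t1 t2
  refine ⟨w, ?_, ?_, ?_, ?_⟩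
  · exact (hu.comp contDiff_fst).mul (hgC.comp contDiff_snd)
  · refine HasCompactSupport.intro (huc.isCompact.prod hχc.isCompact) fun x hx => ?_
    rw [mem_prod, not_and_or] at hx
    rcases hx with hx | hx
    · simp [hw, image_eq_zero_of_notMem_tsupport hx]
    · simp [hw, image_eq_zero_of_notMem_tsupport hx]
  · rw [hN]; positivity
  · rw [hN, hD, div_add' _ _ _ hpos.ne', div_le_div_iff₀ (by positivity) hpos]
    have := mul_le_mul_of_nonneg_left hχ1 (by positivity : 0 ≤ norm2D Ω u ^ 2)
    nlinarith

/-! ### Partial Fourier transform -/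

/-- Partial Fourier transform in the last variable. -/
def pF (g : (ℝ × ℝ) × ℝ → ℂ) (x : ℝ × ℝ) (ξ : ℝ) : ℂ :=
  ∫ z : ℝ, (Real.fourierChar (-(z * ξ)) : ℂ) * g (x, z)

theorem pF_eq (g : (ℝ × ℝ) × ℝ → ℂ) (x : ℝ × ℝ) (ξ : ℝ) :
    pF g x ξ = FourierTransform.fourier (fun z => g (x, z)) ξ := by
  rw [pF, Real.fourier_real_eq]
  rfl

theorem slice_compact_s2 {g : (ℝ × ℝ) × ℝ → ℂ} (hgc : HasCompactSupport g) (x : ℝ × ℝ) :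
    HasCompactSupport (fun z => g (x, z)) := by
  refine HasCompactSupport.intro (hgc.isCompact.image continuous_snd) fun z hz => ?_
  apply image_eq_zero_of_notMem_tsupport
  intro h
  exact hz ⟨_, h, rfl⟩

theorem pF_integrable {g : (ℝ × ℝ) × ℝ → ℂ} (hg : Continuous g) (hgc : HasCompactSupport g)
    (x : ℝ × ℝ) (ξ : ℝ) :
    Integrable (fun z : ℝ => (Real.fourierChar (-(z * ξ)) : ℂ) * g (x, z)) := by
  apply Continuous.integrable_of_hasCompactSupport
  · have : Continuous (fun z : ℝ => (Real.fourierChar (-(z * ξ)) : ℂ)) :=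
      continuous_subtype_val.comp (Real.continuous_fourierChar.comp (by fun_prop))
    fun_prop
  · exact (slice_compact_s2 hgc x).mul_left

theorem pF_lin {g h : (ℝ × ℝ) × ℝ → ℂ} (hg : Continuous g) (hgc : HasCompactSupport g)
    (hh : Continuous h) (hhc : HasCompactSupport h) (a : ℂ) (b : ℝ × ℝ → ℂ) (x : ℝ × ℝ) (ξ : ℝ) :
    pF (fun y => a * g y + b y.1 * h y) x ξ = a * pF g x ξ + b x * pF h x ξ := by
  unfold pF
  rw [← integral_const_mul, ← integral_const_mul, ← integral_add]
  · congr 1; ext z; ring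
  · exact (pF_integrable hg hgc x ξ).const_mul a
  · exact (pF_integrable hh hhc x ξ).const_mul (b x)

theorem pF_continuous {g : (ℝ × ℝ) × ℝ → ℂ} (hg : Continuous g) (hgc : HasCompactSupport g) :
    Continuous (fun p : (ℝ × ℝ) × ℝ => pF g p.1 p.2) := by
  have hK : IsCompact (Prod.snd '' tsupport g) := hgc.isCompact.image continuous_snd
  have h1 : ∀ p : (ℝ × ℝ) × ℝ, pF g p.1 p.2 = ∫ z in Prod.snd '' tsupport g,
      (Real.fourierChar (-(z * p.2)) : ℂ) * g (p.1, z) := by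
    intro p
    rw [pF, setIntegral_eq_integral_of_forall_compl_eq_zero]
    intro z hz
    have : g (p.1, z) = 0 := by
      apply image_eq_zero_of_notMem_tsupport
      intro h
      exact hz ⟨_, h, rfl⟩
    rw [this, mul_zero]
  simp_rw [h1]
  apply continuous_parametric_integral_of_continuous _ hK
  have : Continuous (fun q : ((ℝ × ℝ) × ℝ) × ℝ => (Real.fourierChar (-(q.2 * q.1.2)) : ℂ)) :=
    continuous_subtype_val.comp (Real.continuous_fourierChar.comp (by fun_prop))
  exact this.mul (hg.comp (by fun_prop))

theorem pF_compact {g : (ℝ × ℝ) × ℝ → ℂ} (hgc : HasCompactSupport g) (ξ : ℝ) :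
    HasCompactSupport (fun x => pF g x ξ) := by
  refine HasCompactSupport.intro (hgc.isCompact.image continuous_fst) fun x hx => ?_
  have : ∀ z, g (x, z) = 0 := by
    intro z
    apply image_eq_zero_of_notMem_tsupport
    intro h
    exact hx ⟨_, h, rfl⟩
  simp [pF, this]

theorem pF_contDiff {g : (ℝ × ℝ) × ℝ → ℂ} (hg : ContDiff ℝ (⊤ : ℕ∞) g)
    (hgc : HasCompactSupport g) (ξ : ℝ) : ContDiff ℝ (⊤ : ℕ∞) (fun x => pF g x ξ) := by
  have hK : IsCompact ((fun z : ℝ => -z) '' (Prod.snd '' tsupport g)) :=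
    (hgc.isCompact.image continuous_snd).image continuous_neg
  have hf : Continuous (fun z : ℝ => (Real.fourierChar (-(z * ξ)) : ℂ)) :=
    continuous_subtype_val.comp (Real.continuous_fourierChar.comp (by fun_prop))
  have key := contDiffOn_convolution_right_with_param_comp (𝕜 := ℝ) (μ := (volume : Measure ℝ))
    (n := (⊤ : ℕ∞)) (ContinuousLinearMap.mul ℝ ℂ) (s := (univ : Set (ℝ × ℝ)))
    (v := fun _ => (0 : ℝ)) contDiffOn_const
    (f := fun z : ℝ => (Real.fourierChar (-(z * ξ)) : ℂ))
    (g := fun (x : ℝ × ℝ) (z : ℝ) => g (x, -z)) isOpen_univ hK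
    (by
      intro x z _ hz
      apply image_eq_zero_of_notMem_tsupport
      intro h
      exact hz ⟨_, ⟨_, h, rfl⟩, by simp⟩)
    hf.locallyIntegrable
    (by
      apply ContDiff.contDiffOn
      exact hg.comp (contDiff_fst.prodMk contDiff_snd.neg))
  rw [contDiffOn_univ] at key
  convert key using 2 with x
  simp [pF, MeasureTheory.convolution]

theorem pF_fderiv {g : (ℝ × ℝ) × ℝ → ℂ} (hg : ContDiff ℝ (⊤ : ℕ∞) g)
    (hgc : HasCompactSupport g) (ξ : ℝ) (x h : ℝ × ℝ) :
    fderiv ℝ (fun x => pF g x ξ) x h = pF (fun y => fderiv ℝ g y (h, 0)) x ξ := by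
  have hK : IsCompact (Prod.snd '' tsupport g) := hgc.isCompact.image continuous_snd
  have hf : Continuous (fun z : ℝ => (Real.fourierChar (-(z * ξ)) : ℂ)) :=
    continuous_subtype_val.comp (Real.continuous_fourierChar.comp (by fun_prop))
  have hg' : Continuous (fderiv ℝ g) := hg.continuous_fderiv (by simp)
  obtain ⟨M, hM⟩ := hg'.bounded_above_of_compact_support (hgc.fderiv (𝕜 := ℝ))
  set F' : ℝ × ℝ → ℝ → (ℝ × ℝ →L[ℝ] ℂ) := fun x z =>
    (Real.fourierChar (-(z * ξ)) : ℂ) •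
      (fderiv ℝ g (x, z)).comp (ContinuousLinearMap.inl ℝ (ℝ × ℝ) ℝ) with hF'
  have hnc : ∀ z : ℝ, ‖(Real.fourierChar (-(z * ξ)) : ℂ)‖ = 1 := fun z => Circle.norm_coe _
  have hzero : ∀ x z, z ∉ Prod.snd '' tsupport g → fderiv ℝ g (x, z) = 0 := by
    intro x z hz
    apply fderiv_of_notMem_tsupport ℝ
    intro h
    exact hz ⟨_, h, rfl⟩
  have hF'c : Continuous (F' x) := by
    have h2 : Continuous fun z => (fderiv ℝ g (x, z)).comp
        (ContinuousLinearMap.inl ℝ (ℝ × ℝ) ℝ) :=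
      (hg'.comp (by fun_prop : Continuous fun z : ℝ => (x, z))).clm_comp continuous_const
    exact hf.smul h2
  have hF'i : Integrable (F' x) := by
    apply hF'c.integrable_of_hasCompactSupport
    refine HasCompactSupport.intro hK fun z hz => ?_
    refine ContinuousLinearMap.ext fun v => ?_
    change (Real.fourierChar (-(z * ξ)) : ℂ) * (fderiv ℝ g (x, z)) (v, 0) = 0
    rw [hzero x z hz]
    exact mul_zero _
  have key : HasFDerivAt (fun x => pF g x ξ) (∫ z, F' x z) x := by
    apply hasFDerivAt_integral_of_dominated_of_fderiv_le (s := univ)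
      (bound := (Prod.snd '' tsupport g).indicator
        (fun _ => M * ‖ContinuousLinearMap.inl ℝ (ℝ × ℝ) ℝ‖)) univ_mem
    · exact Eventually.of_forall fun x' =>
        (pF_integrable hg.continuous hgc x' ξ).aestronglyMeasurable
    · exact pF_integrable hg.continuous hgc x ξ
    · exact hF'c.aestronglyMeasurable
    · refine Eventually.of_forall fun z x' _ => ?_
      by_cases hz : z ∈ Prod.snd '' tsupport g
      · rw [indicator_of_mem hz, hF']
        simp only [norm_smul, hnc, one_mul]
        exact (ContinuousLinearMap.opNorm_comp_le _ _).trans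
          (mul_le_mul_of_nonneg_right (hM _) (norm_nonneg _))
      · rw [indicator_of_notMem hz, hF']
        simp [hzero x' z hz]
    · rw [integrable_indicator_iff hK.measurableSet]
      exact integrableOn_const hK.measure_ne_top
    · refine Eventually.of_forall fun z x' _ => ?_
      have h1 : HasFDerivAt (fun y : ℝ × ℝ => (y, z)) (ContinuousLinearMap.inl ℝ (ℝ × ℝ) ℝ) x' :=
        hasFDerivAt_prodMk_left x' z
      have h2 := (hg.differentiable (by simp) (x', z)).hasFDerivAt.comp x' h1
      exact h2.const_mul _
  rw [key.fderiv, ContinuousLinearMap.integral_apply hF'i, pF]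
  congr 1

theorem pF_deriv {g : (ℝ × ℝ) × ℝ → ℂ} (hg : ContDiff ℝ (⊤ : ℕ∞) g)
    (hgc : HasCompactSupport g) (ξ : ℝ) (x : ℝ × ℝ) :
    pF (fun y => fderiv ℝ g y ((0, 0), 1)) x ξ = (2 * π * Complex.I * ξ) * pF g x ξ := by
  have hs : ContDiff ℝ (⊤ : ℕ∞) (fun z => g (x, z)) :=
    hg.comp (contDiff_const.prodMk contDiff_id)
  have hc := slice_compact_s2 hgc x
  have hd : ∀ z, deriv (fun z => g (x, z)) z = fderiv ℝ g (x, z) ((0, 0), 1) := by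
    intro z
    have h1 : HasDerivAt (fun z : ℝ => (x, z)) ((0 : ℝ × ℝ), (1 : ℝ)) z :=
      (hasDerivAt_const z x).prodMk (hasDerivAt_id z)
    have h2 : deriv (fun z => g (x, z)) z = _ :=
      ((hg.differentiable (by simp) (x, z)).hasFDerivAt.comp_hasDerivAt z h1).deriv
    rw [h2]; rfl
  have := Real.fourier_deriv (hs.continuous.integrable_of_hasCompactSupport hc)
    (hs.differentiable (by simp))
    ((hs.continuous_deriv (by simp)).integrable_of_hasCompactSupport hc.deriv)
  rw [pF_eq, pF_eq]
  have h3 := congrFun this ξ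
  rw [smul_eq_mul] at h3
  rw [← h3]
  have h4 : (fun z => fderiv ℝ g (x, z) ((0, 0), 1)) = deriv (fun z => g (x, z)) :=
    funext fun z => (hd z).symm
  rw [h4]

theorem pF_plancherel {g : (ℝ × ℝ) × ℝ → ℂ} (hg : ContDiff ℝ (⊤ : ℕ∞) g)
    (hgc : HasCompactSupport g) (x : ℝ × ℝ) :
    ∫⁻ ξ, ‖pF g x ξ‖ₑ ^ 2 = ∫⁻ z, ‖g (x, z)‖ₑ ^ 2 := by
  have hs : ContDiff ℝ (⊤ : ℕ∞) (fun z => g (x, z)) :=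
    hg.comp (contDiff_const.prodMk contDiff_id)
  have hc := slice_compact_s2 hgc x
  let s : SchwartzMap ℝ ℂ := hc.toSchwartzMap hs
  have h1 := SchwartzMap.integral_norm_sq_fourier s
  have conv : ∀ f : SchwartzMap ℝ ℂ, ∫⁻ z, ‖f z‖ₑ ^ 2 = ENNReal.ofReal (∫ z, ‖f z‖ ^ 2) := by
    intro f
    rw [ofReal_integral_eq_lintegral_ofReal]
    · congr 1; ext z
      rw [ENNReal.ofReal_pow (norm_nonneg _), ofReal_norm_eq_enorm]
    · exact (f.memLp 2).integrable_norm_pow (by simp)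
    · exact Eventually.of_forall fun z => by positivity
  have e1 : ∀ ξ, pF g x ξ = FourierTransform.fourier s ξ := by
    intro ξ
    rw [pF_eq, SchwartzMap.fourier_coe]
    rfl
  have e2 : ∀ z, g (x, z) = s z := fun z => rfl
  simp only [e1, e2]
  rw [conv, conv, h1]

theorem pF_plancherel_set {g : (ℝ × ℝ) × ℝ → ℂ} (hg : ContDiff ℝ (⊤ : ℕ∞) g)
    (hgc : HasCompactSupport g) (Ω : Set (ℝ × ℝ)) :
    ∫⁻ ξ, ∫⁻ x in Ω, ‖pF g x ξ‖ₑ ^ 2 = ∫⁻ y in Ω ×ˢ (univ : Set ℝ), ‖g y‖ₑ ^ 2 := by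
  have hm : Measurable (fun p : (ℝ × ℝ) × ℝ => ‖pF g p.1 p.2‖ₑ ^ 2) :=
    (pF_continuous hg.continuous hgc).measurable.enorm.pow_const 2
  have hm2 : Measurable (fun p : (ℝ × ℝ) × ℝ => ‖g p‖ₑ ^ 2) :=
    hg.continuous.measurable.enorm.pow_const 2
  rw [← lintegral_lintegral_swap (f := fun x ξ => ‖pF g x ξ‖ₑ ^ 2) hm.aemeasurable]
  simp only [pF_plancherel hg hgc]
  rw [show (volume : Measure ((ℝ × ℝ) × ℝ)) = (volume : Measure (ℝ × ℝ)).prod volume from rfl,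
    ← Measure.prod_restrict, Measure.restrict_univ, lintegral_prod _ hm2.aemeasurable]

/-! ### Lower bound -/

theorem ofReal_sq (v : ℂ) : ENNReal.ofReal (‖v‖ ^ 2) = ‖v‖ₑ ^ 2 := by
  rw [ENNReal.ofReal_pow (norm_nonneg _), ofReal_norm_eq_enorm]

theorem ofReal_sq3 (a b c : ℂ) :
    ENNReal.ofReal (‖a‖ ^ 2 + ‖b‖ ^ 2 + ‖c‖ ^ 2) = ‖a‖ₑ ^ 2 + ‖b‖ₑ ^ 2 + ‖c‖ₑ ^ 2 := by
  rw [ENNReal.ofReal_add (by positivity) (by positivity),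
    ENNReal.ofReal_add (by positivity) (by positivity), ofReal_sq, ofReal_sq, ofReal_sq]

theorem dir_smooth {g : (ℝ × ℝ) × ℝ → ℂ} (hg : ContDiff ℝ (⊤ : ℕ∞) g) (v : (ℝ × ℝ) × ℝ) :
    ContDiff ℝ (⊤ : ℕ∞) (fun y => fderiv ℝ g y v) :=
  (hg.fderiv_right (m := (⊤ : ℕ∞)) (by simp)).clm_apply contDiff_const

theorem dir_compact {g : (ℝ × ℝ) × ℝ → ℂ} (hgc : HasCompactSupport g) (v : (ℝ × ℝ) × ℝ) :
    HasCompactSupport (fun y => fderiv ℝ g y v) := by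
  refine HasCompactSupport.intro hgc.isCompact fun x hx => ?_
  rw [fderiv_of_notMem_tsupport ℝ hx]; rfl

theorem dens2_pF (b1 b2 b3 ξ : ℝ) {w : (ℝ × ℝ) × ℝ → ℂ} (hw : ContDiff ℝ (⊤ : ℕ∞) w)
    (hwc : HasCompactSupport w) (x : ℝ × ℝ) :
    dens2 b1 b2 b3 (-(2 * π * ξ)) (fun x => pF w x ξ) x =
      ‖pF (fun y => (-Complex.I) * fderiv ℝ w y ((1, 0), 0) +
        ((y.1.2 * b3 : ℝ) : ℂ) * w y) x ξ‖ ^ 2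
      + ‖pF (fun y => fderiv ℝ w y ((0, 1), 0)) x ξ‖ ^ 2
      + ‖pF (fun y => (-Complex.I) * fderiv ℝ w y ((0, 0), 1) +
        ((y.1.1 * b2 - y.1.2 * b1 : ℝ) : ℂ) * w y) x ξ‖ ^ 2 := by
  have e1 := pF_lin (dir_smooth hw ((1, 0), 0)).continuous (dir_compact hwc ((1, 0), 0))
    hw.continuous hwc (-Complex.I) (fun x => ((x.2 * b3 : ℝ) : ℂ)) x ξ
  have e3 := pF_lin (dir_smooth hw ((0, 0), 1)).continuous (dir_compact hwc ((0, 0), 1))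
    hw.continuous hwc (-Complex.I) (fun x => ((x.1 * b2 - x.2 * b1 : ℝ) : ℂ)) x ξ
  rw [e1, e3, pF_deriv hw hwc, ← pF_fderiv hw hwc, ← pF_fderiv hw hwc]
  unfold dens2
  congr 1
  have : -Complex.I * (2 * π * Complex.I * ξ * pF w x ξ) +
      ((x.1 * b2 - x.2 * b1 : ℝ) : ℂ) * pF w x ξ =
      ((x.1 * b2 - x.2 * b1 - -(2 * π * ξ) : ℝ) : ℂ) * pF w x ξ := by
    push_cast
    linear_combination (-2 * π * ξ * pF w x ξ) * Complex.I_sq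
  rw [this, norm_mul, mul_pow, Complex.norm_real, Real.norm_eq_abs, sq_abs]

theorem lintegral_add3 {X : Type*} [MeasurableSpace X] (μ : Measure X) {f g h : X → ENNReal}
    (hf : Measurable f) (hg : Measurable g) :
    ∫⁻ x, f x + g x + h x ∂μ = (∫⁻ x, f x ∂μ) + (∫⁻ x, g x ∂μ) + ∫⁻ x, h x ∂μ := by
  have hfg : Measurable (fun x => f x + g x) := hf.add hg
  rw [lintegral_add_left hfg, lintegral_add_left hf]

theorem pF_mm (g : (ℝ × ℝ) × ℝ → ℂ) (hg : ContDiff ℝ (⊤ : ℕ∞) g) (hgc : HasCompactSupport g) :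
    Measurable (fun p : (ℝ × ℝ) × ℝ => ‖pF g p.1 p.2‖ₑ ^ 2) :=
  (pF_continuous hg.continuous hgc).measurable.enorm.pow_const 2

theorem pF_mx (g : (ℝ × ℝ) × ℝ → ℂ) (hg : ContDiff ℝ (⊤ : ℕ∞) g) (hgc : HasCompactSupport g)
    (ξ : ℝ) : Measurable (fun x : ℝ × ℝ => ‖pF g x ξ‖ₑ ^ 2) := by
  have h : Continuous (fun x => pF g x ξ) := (pF_contDiff hg hgc ξ).continuous
  exact h.measurable.enorm.pow_const 2

theorem pF_mξ (Ω : Set (ℝ × ℝ)) (g : (ℝ × ℝ) × ℝ → ℂ) (hg : ContDiff ℝ (⊤ : ℕ∞) g)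
    (hgc : HasCompactSupport g) :
    Measurable (fun ξ : ℝ => ∫⁻ x in Ω, ‖pF g x ξ‖ₑ ^ 2) := by
  have h := pF_mm g hg hgc
  exact Measurable.lintegral_prod_left' (μ := volume.restrict Ω) h

theorem smooth_mg (g : (ℝ × ℝ) × ℝ → ℂ) (hg : ContDiff ℝ (⊤ : ℕ∞) g) :
    Measurable (fun y => ‖g y‖ₑ ^ 2) :=
  hg.continuous.measurable.enorm.pow_const 2

theorem lower_test_aux (Ω : Set (ℝ × ℝ)) (b1 b2 b3 l : ℝ) (hl : 0 ≤ l)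
    (H : ∀ (τ : ℝ) (u : ℝ × ℝ → ℂ), ContDiff ℝ (⊤ : ℕ∞) u → HasCompactSupport u →
      l * norm2D Ω u ≤ energy2D Ω b1 b2 b3 τ u)
    (w : (ℝ × ℝ) × ℝ → ℂ) (hw : ContDiff ℝ (⊤ : ℕ∞) w) (hwc : HasCompactSupport w)
    (g1 g2 g3 : (ℝ × ℝ) × ℝ → ℂ) (s1 : ContDiff ℝ (⊤ : ℕ∞) g1) (s2 : ContDiff ℝ (⊤ : ℕ∞) g2)
    (s3 : ContDiff ℝ (⊤ : ℕ∞) g3) (c1 : HasCompactSupport g1) (c2 : HasCompactSupport g2)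
    (c3 : HasCompactSupport g3)
    (hD2 : ∀ ξ x, dens2 b1 b2 b3 (-(2 * π * ξ)) (fun x => pF w x ξ) x =
      ‖pF g1 x ξ‖ ^ 2 + ‖pF g2 x ξ‖ ^ 2 + ‖pF g3 x ξ‖ ^ 2)
    (hD3 : ∀ y, dens3 b1 b2 b3 w y = ‖g1 y‖ ^ 2 + ‖g2 y‖ ^ 2 + ‖g3 y‖ ^ 2) :
    l * (∫ x in Ω ×ˢ (univ : Set ℝ), ‖w x‖ ^ 2) ≤
      ∫ x in Ω ×ˢ (univ : Set ℝ), dens3 b1 b2 b3 w x := by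
  have mx := fun g hg hgc => @pF_mx g hg hgc
  have mξ := fun g hg hgc => @pF_mξ Ω g hg hgc
  have mg := @smooth_mg
  -- fibrewise inequality
  have fib : ∀ ξ, ENNReal.ofReal l * ∫⁻ x in Ω, ‖pF w x ξ‖ₑ ^ 2 ≤
      (∫⁻ x in Ω, ‖pF g1 x ξ‖ₑ ^ 2) + (∫⁻ x in Ω, ‖pF g2 x ξ‖ₑ ^ 2)
        + ∫⁻ x in Ω, ‖pF g3 x ξ‖ₑ ^ 2 := by
    intro ξ
    have hv := pF_contDiff hw hwc ξ
    have hvc := pF_compact hwc ξ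
    have h := ENNReal.ofReal_le_ofReal (H (-(2 * π * ξ)) _ hv hvc)
    rw [ENNReal.ofReal_mul hl, norm2D, ofReal_integral_eq_lintegral_ofReal
      (normSq_integrable volume _ hv.continuous hvc).integrableOn
      (Eventually.of_forall fun x => by positivity)] at h
    have e : energy2D Ω b1 b2 b3 (-(2 * π * ξ)) (fun x => pF w x ξ) =
      ∫ x in Ω, dens2 b1 b2 b3 (-(2 * π * ξ)) (fun x => pF w x ξ) x := rfl
    rw [e, ofReal_integral_eq_lintegral_ofReal
      (dens2_integrable b1 b2 b3 _ _ hv hvc).integrableOn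
      (Eventually.of_forall fun x => by simp only [dens2]; positivity)] at h
    simp only [hD2, ofReal_sq3, ofReal_sq] at h
    rw [lintegral_add3 _ (mx g1 s1 c1 ξ) (mx g2 s2 c2 ξ)] at h
    exact h
  have tot := lintegral_mono (μ := (volume : Measure ℝ)) fib
  rw [lintegral_const_mul _ (mξ w hw hwc),
    lintegral_add3 _ (mξ g1 s1 c1) (mξ g2 s2 c2), pF_plancherel_set hw hwc, pF_plancherel_set s1 c1,
    pF_plancherel_set s2 c2, pF_plancherel_set s3 c3,
    ← lintegral_add3 _ (mg g1 s1) (mg g2 s2)] at tot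
  have hd : ∀ y, 0 ≤ dens3 b1 b2 b3 w y := fun y => by simp only [dens3]; positivity
  have e3 : ENNReal.ofReal (∫ x in Ω ×ˢ (univ : Set ℝ), dens3 b1 b2 b3 w x) =
      ∫⁻ y in Ω ×ˢ (univ : Set ℝ), ‖g1 y‖ₑ ^ 2 + ‖g2 y‖ₑ ^ 2 + ‖g3 y‖ₑ ^ 2 := by
    rw [ofReal_integral_eq_lintegral_ofReal (dens3_integrable b1 b2 b3 w hw hwc).integrableOn
      (Eventually.of_forall hd)]
    refine lintegral_congr fun y => ?_
    rw [← ofReal_sq3, hD3]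
  have e0 : ENNReal.ofReal (∫ x in Ω ×ˢ (univ : Set ℝ), ‖w x‖ ^ 2) =
      ∫⁻ y in Ω ×ˢ (univ : Set ℝ), ‖w y‖ₑ ^ 2 := by
    rw [ofReal_integral_eq_lintegral_ofReal
      (normSq_integrable volume w hw.continuous hwc).integrableOn
      (Eventually.of_forall fun x => by positivity)]
    exact lintegral_congr fun y => ofReal_sq _
  rw [← ENNReal.ofReal_le_ofReal_iff (integral_nonneg hd), ENNReal.ofReal_mul hl, e0, e3]
  exact tot

theorem lower_test (Ω : Set (ℝ × ℝ)) (b1 b2 b3 l : ℝ) (hl : 0 ≤ l)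
    (H : ∀ (τ : ℝ) (u : ℝ × ℝ → ℂ), ContDiff ℝ (⊤ : ℕ∞) u → HasCompactSupport u →
      l * norm2D Ω u ≤ energy2D Ω b1 b2 b3 τ u)
    (w : (ℝ × ℝ) × ℝ → ℂ) (hw : ContDiff ℝ (⊤ : ℕ∞) w) (hwc : HasCompactSupport w) :
    l * (∫ x in Ω ×ˢ (univ : Set ℝ), ‖w x‖ ^ 2) ≤
      ∫ x in Ω ×ˢ (univ : Set ℝ), dens3 b1 b2 b3 w x := by
  have r1 : ContDiff ℝ (⊤ : ℕ∞) (fun y : (ℝ × ℝ) × ℝ => ((y.1.2 * b3 : ℝ) : ℂ)) :=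
    Complex.ofRealCLM.contDiff.comp (by fun_prop : ContDiff ℝ (⊤ : ℕ∞)
      fun y : (ℝ × ℝ) × ℝ => y.1.2 * b3)
  have r3 : ContDiff ℝ (⊤ : ℕ∞)
      (fun y : (ℝ × ℝ) × ℝ => ((y.1.1 * b2 - y.1.2 * b1 : ℝ) : ℂ)) :=
    Complex.ofRealCLM.contDiff.comp (by fun_prop : ContDiff ℝ (⊤ : ℕ∞)
      fun y : (ℝ × ℝ) × ℝ => y.1.1 * b2 - y.1.2 * b1)
  exact lower_test_aux Ω b1 b2 b3 l hl H w hw hwc _ _ _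
    ((contDiff_const.mul (dir_smooth hw ((1, 0), 0))).add (r1.mul hw)) (dir_smooth hw ((0, 1), 0))
    ((contDiff_const.mul (dir_smooth hw ((0, 0), 1))).add (r3.mul hw))
    ((dir_compact hwc ((1, 0), 0)).mul_left.add hwc.mul_left) (dir_compact hwc ((0, 1), 0))
    ((dir_compact hwc ((0, 0), 1)).mul_left.add hwc.mul_left)
    (fun ξ x => dens2_pF b1 b2 b3 ξ hw hwc x) (fun y => rfl)

/-! ### Half-plane -/

theorem hpLow_isOpen (α : ℝ) : IsOpen (hpLow α) := by
  apply isOpen_lt <;> fun_prop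

theorem exists_test (α : ℝ) (h : 0 < Real.tan (α / 2)) : ∃ u : ℝ × ℝ → ℂ,
    ContDiff ℝ (⊤ : ℕ∞) u ∧ HasCompactSupport u ∧ 0 < norm2D (hpLow α) u := by
  let f : ContDiffBump ((1, 0) : ℝ × ℝ) := default
  have hf : ContDiff ℝ (⊤ : ℕ∞) f := f.contDiff
  have hc : HasCompactSupport (f : ℝ × ℝ → ℝ) := f.hasCompactSupport
  refine ⟨fun x => (f x : ℂ), Complex.ofRealCLM.contDiff.comp hf,
    hc.comp_left (g := fun r : ℝ => (r : ℂ)) (by simp), ?_⟩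
  have hcont : Continuous (fun x => (f x : ℂ)) := Complex.continuous_ofReal.comp hf.continuous
  have hcs : HasCompactSupport (fun x => (f x : ℂ)) :=
    hc.comp_left (g := fun r : ℝ => (r : ℂ)) (by simp)
  rw [norm2D, setIntegral_pos_iff_support_of_nonneg_ae
    (Eventually.of_forall fun x => by positivity)
    (normSq_integrable volume _ hcont hcs).integrableOn]
  apply IsOpen.measure_pos
  · refine IsOpen.inter ?_ (hpLow_isOpen α)
    have : Continuous (fun x => ‖(f x : ℂ)‖ ^ 2) := by fun_prop
    exact this.isOpen_support
  · refine ⟨(1, 0), ?_, ?_⟩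
    · have : f (1, 0) = 1 := f.one_of_mem_closedBall (by simp [f.rIn_pos.le])
      simp [this]
    · simp [hpLow, h]

/-! ### Final assembly -/

theorem norm_phase (r : ℝ) (v : ℂ) : ‖Complex.exp (Complex.I * (r : ℂ)) * v‖ = ‖v‖ := by
  rw [norm_mul, mul_comm Complex.I, Complex.norm_exp_ofReal_mul_I, one_mul]

theorem phase_smooth {E : Type*} [NormedAddCommGroup E] [NormedSpace ℝ E] {φ : E → ℝ}
    (hφ : ContDiff ℝ (⊤ : ℕ∞) φ) :
    ContDiff ℝ (⊤ : ℕ∞) (fun y => Complex.exp (Complex.I * (φ y : ℂ))) := by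
  have : ContDiff ℝ (⊤ : ℕ∞) (fun y => (φ y : ℂ)) := Complex.ofRealCLM.contDiff.comp hφ
  exact (contDiff_const.mul this).cexp

theorem assembly (Ω : Set (ℝ × ℝ)) (hΩm : MeasurableSet Ω) (c d p q S C θ : ℝ)
    (h1 : c ^ 2 + d ^ 2 = 1) (h2 : p ^ 2 + q ^ 2 = 1)
    (h3 : p * Real.cos θ = S * (c ^ 2 - d ^ 2)) (h4 : q * Real.cos θ = C)
    (h5 : Real.sin θ = 2 * S * c * d)
    (hdom : ∀ x, x ∈ Ω ↔ 0 < d * x.1 + c * x.2)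
    (hS : S * c * d ≠ 0) (τ : ℝ)
    (hne : ∃ u : ℝ × ℝ → ℂ,
      ContDiff ℝ (⊤ : ℕ∞) u ∧ HasCompactSupport u ∧ 0 < norm2D Ω u) :
    specInf2D Ω (S * c) (S * d) C τ = sigmaHS θ := by
  obtain ⟨k, hk, hrot⟩ := rot_integral Ω hΩm c d p q h1 h2 hdom
  set T := rotEquiv c d p q h1 h2 with hT
  set φ := quadPhase (-(p^2*c*d*C)+p*q*Real.sin θ) (c*d*C) (-(q^2*c*d*C)-p*q*Real.sin θ)
    (p*c^2*C - q*S*(c^2-d^2)) (p*q*c*d*C - q^2*Real.sin θ) (q*d^2*C) with hφ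
  have hφs : ContDiff ℝ (⊤ : ℕ∞) φ := quadPhase_contDiff _ _ _ _ _ _
  have dens : ∀ w : (ℝ × ℝ) × ℝ → ℂ, Differentiable ℝ w → ∀ y,
      densM (Real.cos θ) (Real.sin θ) (fun y => Complex.exp (Complex.I * (φ y : ℂ)) * w (T y)) y
        = dens3 (S * c) (S * d) C w (T y) := fun w hw y =>
    density_eq c d p q S C (Real.cos θ) (Real.sin θ) h1 h2 h3 h4 h5 w hw y
  -- transfer of integrals
  have trN : ∀ w : (ℝ × ℝ) × ℝ → ℂ,
      ∫ y in halfSpace3, ‖Complex.exp (Complex.I * (φ y : ℂ)) * w (T y)‖ ^ 2 =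
        k * ∫ x in Ω ×ˢ (univ : Set ℝ), ‖w x‖ ^ 2 := by
    intro w
    simp only [norm_phase]
    exact hrot fun x => ‖w x‖ ^ 2
  have trE : ∀ w : (ℝ × ℝ) × ℝ → ℂ, Differentiable ℝ w →
      ∫ y in halfSpace3, densM (Real.cos θ) (Real.sin θ)
        (fun y => Complex.exp (Complex.I * (φ y : ℂ)) * w (T y)) y =
        k * ∫ x in Ω ×ˢ (univ : Set ℝ), dens3 (S * c) (S * d) C w x := by
    intro w hw
    simp only [dens w hw]
    exact hrot fun x => dens3 (S * c) (S * d) C w x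
  have hσ : sigmaHS θ = sInf { r : ℝ | ∃ u : ℝ × ℝ × ℝ → ℂ, ContDiff ℝ (⊤ : ℕ∞) u ∧
      HasCompactSupport u ∧ (0 < ∫ x in halfSpace3, ‖u x‖ ^ 2) ∧
      r = (∫ x in halfSpace3, densM (Real.cos θ) (Real.sin θ) u x) /
        (∫ x in halfSpace3, ‖u x‖ ^ 2) } := rfl
  rw [hσ, specInf2D]
  set A := { r : ℝ | ∃ u : ℝ × ℝ → ℂ, ContDiff ℝ (⊤ : ℕ∞) u ∧ HasCompactSupport u ∧
    0 < norm2D Ω u ∧ r = energy2D Ω (S * c) (S * d) C τ u / norm2D Ω u } with hA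
  set B := { r : ℝ | ∃ u : ℝ × ℝ × ℝ → ℂ, ContDiff ℝ (⊤ : ℕ∞) u ∧
      HasCompactSupport u ∧ (0 < ∫ x in halfSpace3, ‖u x‖ ^ 2) ∧
      r = (∫ x in halfSpace3, densM (Real.cos θ) (Real.sin θ) u x) /
        (∫ x in halfSpace3, ‖u x‖ ^ 2) } with hB
  have en : ∀ (τ : ℝ) u, 0 ≤ energy2D Ω (S * c) (S * d) C τ u := fun τ u =>
    integral_nonneg fun x => by positivity
  have hA0 : ∀ r ∈ A, 0 ≤ r := by
    rintro r ⟨u, -, -, hp, rfl⟩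
    exact div_nonneg (en _ _) hp.le
  have hB0 : ∀ r ∈ B, 0 ≤ r := by
    rintro r ⟨u, -, -, hp, rfl⟩
    exact div_nonneg (integral_nonneg fun x => by simp only [densM]; positivity) hp.le
  have hAbd : BddBelow A := ⟨0, hA0⟩
  have hBbd : BddBelow B := ⟨0, hB0⟩
  have hAne : A.Nonempty := by
    obtain ⟨u, a, b, e⟩ := hne
    exact ⟨_, u, a, b, e, rfl⟩
  have up : ∀ a ∈ A, ∀ ε > 0, ∃ b ∈ B, b ≤ a + ε := by
    rintro a ⟨u, hu, huc, hp, rfl⟩ ε hε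
    obtain ⟨w, hw, hwc, hwp, hle⟩ := upper_test Ω (S * c) (S * d) C τ ε hε u hu huc hp
    have hcomp : HasCompactSupport (fun y => w (T y)) := hwc.comp_homeomorph T.toHomeomorph
    refine ⟨_, ⟨fun y => Complex.exp (Complex.I * (φ y : ℂ)) * w (T y),
      (phase_smooth hφs).mul (hw.comp T.contDiff), hcomp.mul_left, ?_, rfl⟩, ?_⟩
    · rw [trN]; positivity
    · rw [trN, trE w (hw.differentiable (by simp)), mul_div_mul_left _ _ hk.ne']
      exact hle
  have hBne : B.Nonempty := by
    obtain ⟨a, ha⟩ := hAne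
    obtain ⟨b, hb, -⟩ := up a ha 1 one_pos
    exact ⟨b, hb⟩
  apply le_antisymm
  · apply le_csInf hBne
    rintro b ⟨u, hu, huc, hp, rfl⟩
    set w : (ℝ × ℝ) × ℝ → ℂ := fun x =>
      Complex.exp (Complex.I * ((-φ (T.symm x) : ℝ) : ℂ)) * u (T.symm x) with hw
    have huw : u = fun y => Complex.exp (Complex.I * (φ y : ℂ)) * w (T y) := by
      ext y
      simp only [hw, ContinuousLinearEquiv.symm_apply_apply]
      rw [← mul_assoc, ← Complex.exp_add]
      push_cast
      rw [mul_neg, add_neg_cancel, Complex.exp_zero, one_mul]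
    have hws : ContDiff ℝ (⊤ : ℕ∞) w :=
      (phase_smooth (hφs.comp T.symm.contDiff).neg).mul (hu.comp T.symm.contDiff)
    have hcomp : HasCompactSupport (fun y => u (T.symm y)) :=
      huc.comp_homeomorph T.symm.toHomeomorph
    have hwc : HasCompactSupport w := hcomp.mul_left
    have hinv : ∀ (x : ℝ × ℝ) (r : ℝ), x + (r * c, -(r * d)) ∈ Ω ↔ x ∈ Ω := by
      intro x r
      rw [hdom, hdom]
      have : d * (x + (r * c, -(r * d))).1 + c * (x + (r * c, -(r * d))).2 =
          d * x.1 + c * x.2 := by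
        simp only [Prod.fst_add, Prod.snd_add]; ring
      rw [this]
    have H : ∀ (τ : ℝ) (u : ℝ × ℝ → ℂ), ContDiff ℝ (⊤ : ℕ∞) u → HasCompactSupport u →
        sInf A * norm2D Ω u ≤ energy2D Ω (S * c) (S * d) C τ u := by
      intro τ' v hv hvc
      have hn : 0 ≤ norm2D Ω v := integral_nonneg fun x => by positivity
      rcases hn.eq_or_lt with h0 | h0
      · rw [← h0, mul_zero]; exact en _ _
      · obtain ⟨v', hv', hvc', e1, e2⟩ := shift_test Ω c d S C τ' τ hS hinv v hv hvc
        have := csInf_le hAbd (show energy2D Ω (S * c) (S * d) C τ v' / norm2D Ω v' ∈ A from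
          ⟨v', hv', hvc', by rw [e1]; exact h0, rfl⟩)
        rw [e1, e2, le_div_iff₀ h0] at this
        exact this
    have key := lower_test Ω (S * c) (S * d) C (sInf A) (Real.sInf_nonneg hA0) H w hws hwc
    rw [le_div_iff₀ hp, huw, trN, trE w (hws.differentiable (by simp))]
    calc _ = k * (sInf A * ∫ x in Ω ×ˢ (univ : Set ℝ), ‖w x‖ ^ 2) := by ring
      _ ≤ _ := mul_le_mul_of_nonneg_left key hk.le
  · apply le_csInf hAne
    intro a ha
    apply le_of_forall_pos_le_add
    intro ε hε
    obtain ⟨b, hb, hle⟩ := up a ha ε hε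
    exact (csInf_le hBbd hb).trans hle

theorem final (α γ : ℝ) (hα : α ∈ Set.Ioo 0 π) (hγ : γ ∈ Set.Ioc 0 (π / 2)) (τ : ℝ) :
      specInf2D (hpLow α)
          (Real.sin γ * Real.cos (α / 2)) (Real.sin γ * Real.sin (α / 2)) (Real.cos γ) τ
        = sigmaHS (Real.arcsin (Real.sin α * Real.sin γ)) := by
  obtain ⟨ha0, ha1⟩ := hα
  obtain ⟨hg0, hg1⟩ := hγ
  have hc : 0 < Real.cos (α / 2) := Real.cos_pos_of_mem_Ioo ⟨by linarith, by linarith⟩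
  have hd : 0 < Real.sin (α / 2) := Real.sin_pos_of_pos_of_lt_pi (by linarith) (by linarith)
  have hS : 0 < Real.sin γ := Real.sin_pos_of_pos_of_lt_pi hg0 (by linarith)
  have ht : Real.tan (α / 2) = Real.sin (α / 2) / Real.cos (α / 2) := Real.tan_eq_sin_div_cos _
  have hsα : Real.sin α = 2 * Real.sin (α / 2) * Real.cos (α / 2) := by
    rw [← Real.sin_two_mul]; congr 1; ring
  have h1 : Real.cos (α / 2) ^ 2 + Real.sin (α / 2) ^ 2 = 1 := Real.cos_sq_add_sin_sq _
  have hγ1 : Real.sin γ ^ 2 + Real.cos γ ^ 2 = 1 := Real.sin_sq_add_cos_sq _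
  set c := Real.cos (α / 2)
  set d := Real.sin (α / 2)
  set S := Real.sin γ
  set C := Real.cos γ
  set θ := Real.arcsin (Real.sin α * S) with hθ
  have hsθ : Real.sin θ = 2 * S * c * d := by
    rw [hθ, Real.sin_arcsin, hsα]
    · ring
    · have h := Real.neg_one_le_sin α
      have : 0 < Real.sin α * S := by rw [hsα]; positivity
      linarith
    · exact mul_le_one₀ (Real.sin_le_one α) hS.le (Real.sin_le_one γ)
  have hcθ : Real.cos θ ^ 2 = (S * (c ^ 2 - d ^ 2)) ^ 2 + C ^ 2 := by
    rw [Real.cos_sq', hsθ]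
    have e1 : C ^ 2 = 1 - S ^ 2 := by linarith
    have e2 : c ^ 2 = 1 - d ^ 2 := by linarith
    rw [e1, e2]
    have : (2 * S * c * d) ^ 2 = 4 * S ^ 2 * c ^ 2 * d ^ 2 := by ring
    rw [this, e2]; ring
  obtain ⟨p, q, h2, h3, h4⟩ : ∃ p q : ℝ, p ^ 2 + q ^ 2 = 1 ∧
      p * Real.cos θ = S * (c ^ 2 - d ^ 2) ∧ q * Real.cos θ = C := by
    by_cases h0 : Real.cos θ = 0
    · rw [h0] at hcθ
      have i1 : S * (c ^ 2 - d ^ 2) = 0 := by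
        nlinarith [sq_nonneg (S * (c ^ 2 - d ^ 2)), sq_nonneg C]
      have i2 : C = 0 := by
        nlinarith [sq_nonneg (S * (c ^ 2 - d ^ 2)), sq_nonneg C]
      exact ⟨1, 0, by norm_num, by rw [h0, i1, mul_zero], by rw [i2, zero_mul]⟩
    · refine ⟨S * (c ^ 2 - d ^ 2) / Real.cos θ, C / Real.cos θ, ?_, ?_, ?_⟩
      · rw [div_pow, div_pow, ← add_div, ← hcθ]
        exact div_self (pow_ne_zero 2 h0)
      · exact div_mul_cancel₀ _ h0
      · exact div_mul_cancel₀ _ h0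
  refine assembly (hpLow α) (hpLow_isOpen α).measurableSet c d p q S C θ h1 h2 h3 h4 hsθ ?_
    (by positivity) τ (exists_test α (by rw [ht]; positivity))
  intro x
  change -(x.1 * Real.tan (α / 2)) < x.2 ↔ _
  rw [ht, ← sub_pos]
  have : d * x.1 + c * x.2 = c * (x.2 - -(x.1 * (d / c))) := by field_simp; ring
  rw [this, mul_pos_iff_of_pos_left hc]

end MagWedge

open MagWedge in
/-- the bottom of the spectrum on the lower half-plane `Hp^low` is
`σ(arcsin(sin α · sin γ))`, independently of `τ`. -/
theorem specInf_hpLow_eq (α γ : ℝ) (hα : α ∈ Set.Ioo 0 π) (hγ : γ ∈ Set.Ioc 0 (π / 2)) :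
    ∀ τ : ℝ,
      specInf2D (hpLow α)
          (Real.sin γ * Real.cos (α / 2)) (Real.sin γ * Real.sin (α / 2)) (Real.cos γ) τ
        = sigmaHS (Real.arcsin (Real.sin α * Real.sin γ)) := by
  exact fun τ => MagWedge.final α γ hα hγ τ
end
end
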